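/- arXiv:0709.2334 — 2 statements merged into one kernel-verified Lean document; each statement's English description precedes it below -/
import Mathlib

section
/- Let k be a field and let H be a commutative noetherian Hopf algebra over k. Then H is Gorenstein; that is, H has finite injective dimension as a module over itself. -/
open CategoryTheory

universe w v u u' u2

/-!
STATEMENT 8:
A commutative noetherian Hopf algebra over a field is Gorenstein: it has finite
injective dimension as a module over itself.  The injective dimension (an element
of `ℕ∞`) is expressed through the vanishing of the Ext-groups `Ext^i (-, H)`.
-/

/-! ### Ext groups over an arbitrary ring -/

instance hasExtModuleCat (R : Type u) [Ring R] :
    HasExt.{max u (v + 1)} (ModuleCat.{v} R) :=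
  letI := HasDerivedCategory.standard (ModuleCat.{v} R)
  hasExt_of_hasDerivedCategory _

/-- The canonical map `(X ⟶ Y) → Ext X Y 0` is additive. -/
lemma Ext_mk₀_add {C : Type*} [Category C] [Abelian C] [HasExt.{w} C] {X Y : C}
    (f g : X ⟶ Y) :
    Abelian.Ext.mk₀ (f + g) = Abelian.Ext.mk₀ f + Abelian.Ext.mk₀ g := by
  letI := HasDerivedCategory.standard C
  ext
  rw [Abelian.Ext.add_hom, Abelian.Ext.mk₀_hom, Abelian.Ext.mk₀_hom, Abelian.Ext.mk₀_hom,
    Functor.map_add]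
  dsimp [ShiftedHom.mk₀]
  rw [Preadditive.add_comp]

/-- The Ext-group `Ext_A^i (M, N)` for two left `A`-modules `M` and `N`. -/
noncomputable abbrev ExtGroup (A : Type u) [Ring A]
    (M : Type v) [AddCommGroup M] [Module A M]
    (N : Type w) [AddCommGroup N] [Module A N] (i : ℕ) :=
  Abelian.Ext (C := ModuleCat.{max v w u} A)
    (ModuleCat.of A (ULift.{max w u} M)) (ModuleCat.of A (ULift.{max v u} N)) i


/-- The injective dimension of `A` as a module over itself, an element of `ℕ∞`:
the least `n` such that `Ext_A^i (M, A) = 0` for all modules `M` and all `i > n`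
(and `∞` if there is no such `n`). -/
noncomputable def selfInjectiveDimension (A : Type u) [Ring A] : ℕ∞ :=
  sInf {d : ℕ∞ | ∃ n : ℕ, d = (n : ℕ∞) ∧
    ∀ (M : Type u) [AddCommGroup M] [Module A M],
      ∀ i : ℕ, n < i → Subsingleton (ExtGroup A M A i)}

open CategoryTheory

/-! ### Vanishing of Ext -/

/-- `Ext^{i+1}_R(X,N) = 0`. -/
def EV (R : Type u) [CommRing R] (X N : Type u) [AddCommGroup X] [Module R X]
    [AddCommGroup N] [Module R N] (i : ℕ) : Prop :=
  Subsingleton (Abelian.Ext.{u} (ModuleCat.of R X) (ModuleCat.of R N) (i + 1))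

section EVbasic
variable {R : Type u} [CommRing R] {X Y P N : Type u} [AddCommGroup X] [Module R X]
  [AddCommGroup Y] [Module R Y] [AddCommGroup P] [Module R P] [AddCommGroup N] [Module R N]

lemma se_of_exact (a : Y →ₗ[R] P) (b : P →ₗ[R] X) (ha : Function.Injective a)
    (hb : Function.Surjective b) (hab : Function.Exact a b) :
    (ShortComplex.mk (ModuleCat.ofHom a) (ModuleCat.ofHom b)
      (by ext x; exact hab.apply_apply_eq_zero x)).ShortExact where
  exact := (ShortComplex.ShortExact.moduleCat_exact_iff_function_exact _).mpr hab
  mono_f := (ModuleCat.mono_iff_injective _).mpr ha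
  epi_g := (ModuleCat.epi_iff_surjective _).mpr hb

lemma ext_proj_zero [Module.Projective R P] (i : ℕ)
    (e : Abelian.Ext.{u} (ModuleCat.of R P) (ModuleCat.of R N) (i + 1)) : e = 0 := by
  have : CategoryTheory.Projective (ModuleCat.of R P) := (IsProjective.iff_projective P).mp ‹_›
  exact Abelian.Ext.eq_zero_of_projective e

lemma EV_zero_iff [Module.Projective R P] (a : Y →ₗ[R] P) (b : P →ₗ[R] X)
    (ha : Function.Injective a) (hb : Function.Surjective b) (hab : Function.Exact a b) :
    EV R X N 0 ↔ ∀ f : Y →ₗ[R] N, ∃ g : P →ₗ[R] N, g ∘ₗ a = f := by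
  have hS := se_of_exact a b ha hb hab
  constructor
  · intro h f
    have h' : Subsingleton (Abelian.Ext.{u} (ModuleCat.of R X) (ModuleCat.of R N) 1) := h
    obtain ⟨x, hx⟩ := Abelian.Ext.contravariant_sequence_exact₁ hS _
      (Abelian.Ext.mk₀ (ModuleCat.ofHom f) : Abelian.Ext.{u} _ _ 0) (add_zero 1) (h'.elim _ _)
    obtain ⟨g, rfl⟩ := (Abelian.Ext.mk₀_bijective _ _).2 x
    rw [Abelian.Ext.mk₀_comp_mk₀] at hx
    have := (Abelian.Ext.mk₀_bijective _ _).1 hx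
    refine ⟨g.hom, ?_⟩
    ext y
    exact congrArg (fun t => t.hom y) this
  · intro h
    refine subsingleton_of_forall_eq 0 fun e => ?_
    obtain ⟨x, rfl⟩ := Abelian.Ext.contravariant_sequence_exact₃ hS _ e
      (ext_proj_zero 0 _) (add_zero 1)
    obtain ⟨f, rfl⟩ := (Abelian.Ext.mk₀_bijective _ _).2 x
    obtain ⟨g, hg⟩ := h f.hom
    have : f = ModuleCat.ofHom a ≫ ModuleCat.ofHom g := by
      ext y; exact (LinearMap.congr_fun hg y).symm
    rw [this, ← Abelian.Ext.mk₀_comp_mk₀, ← Abelian.Ext.comp_assoc_of_second_deg_zero]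
    have h0 := ShortComplex.ShortExact.extClass_comp.{u} hS
    dsimp only at h0
    rw [h0, Abelian.Ext.zero_comp]

lemma EV_succ_iff [Module.Projective R P] (a : Y →ₗ[R] P) (b : P →ₗ[R] X)
    (ha : Function.Injective a) (hb : Function.Surjective b) (hab : Function.Exact a b) (i : ℕ) :
    EV R X N (i + 1) ↔ EV R Y N i := by
  have hS := se_of_exact a b ha hb hab
  constructor
  · intro h
    refine subsingleton_of_forall_eq 0 fun e => ?_
    have h' : Subsingleton (Abelian.Ext.{u} (ModuleCat.of R X) (ModuleCat.of R N) (i+1+1)) := h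
    obtain ⟨x, rfl⟩ := Abelian.Ext.contravariant_sequence_exact₁ hS _ e (by ring) (h'.elim _ _)
    rw [ext_proj_zero i x, Abelian.Ext.comp_zero]
  · intro h
    refine subsingleton_of_forall_eq 0 fun e => ?_
    have h' : Subsingleton (Abelian.Ext.{u} (ModuleCat.of R Y) (ModuleCat.of R N) (i+1)) := h
    obtain ⟨x, rfl⟩ := Abelian.Ext.contravariant_sequence_exact₃ hS _ e
      (ext_proj_zero (i + 1) _) (n₀ := i + 1) (by ring)
    have := h'.elim x 0
    rw [this, Abelian.Ext.comp_zero]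

lemma EV_middle (a : Y →ₗ[R] P) (b : P →ₗ[R] X)
    (ha : Function.Injective a) (hb : Function.Surjective b) (hab : Function.Exact a b) (i : ℕ)
    (h1 : EV R Y N i) (h2 : EV R X N i) : EV R P N i := by
  have hS := se_of_exact a b ha hb hab
  refine subsingleton_of_forall_eq 0 fun e => ?_
  obtain ⟨x, rfl⟩ := Abelian.Ext.contravariant_sequence_exact₂ hS _ e (h1.elim _ _)
  have := h2.elim x 0
  rw [this, Abelian.Ext.comp_zero]

/-- multiplication by `x` is surjective on Ext if the quotient has vanishing next Ext. -/
lemma EV_smul_surj (x : R) (b : Y →ₗ[R] X) (ha : Function.Injective (x • LinearMap.id : Y →ₗ[R] Y))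
    (hb : Function.Surjective b) (hab : Function.Exact (x • LinearMap.id : Y →ₗ[R] Y) b) (i : ℕ)
    (h : EV R X N (i + 1))
    (e : Abelian.Ext.{u} (ModuleCat.of R Y) (ModuleCat.of R N) (i + 1)) : ∃ e', x • e' = e := by
  have hS := se_of_exact _ b ha hb hab
  have h' : Subsingleton (Abelian.Ext.{u} (ModuleCat.of R X) (ModuleCat.of R N) (i+1+1)) := h
  obtain ⟨e', rfl⟩ := Abelian.Ext.contravariant_sequence_exact₁ hS _ e (by ring) (h'.elim _ _)
  refine ⟨e', ?_⟩
  have : ModuleCat.ofHom (x • LinearMap.id : Y →ₗ[R] Y) = x • 𝟙 (ModuleCat.of R Y) := rfl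
  dsimp only
  rw [this, Abelian.Ext.mk₀_smul, Abelian.Ext.smul_comp]
  simp

lemma EV_congr_left (e : X ≃ₗ[R] Y) (i : ℕ) (h : EV R X N i) : EV R Y N i := by
  refine subsingleton_of_forall_eq 0 fun t => ?_
  have h1 : (Abelian.Ext.mk₀.{u} (e.toModuleIso.inv)).comp
    ((Abelian.Ext.mk₀.{u} (e.toModuleIso.hom)).comp t (zero_add _)) (zero_add _) = t := by
    rw [← Abelian.Ext.comp_assoc_of_second_deg_zero, Abelian.Ext.mk₀_comp_mk₀]
    rw [Iso.inv_hom_id, Abelian.Ext.mk₀_id_comp]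
  rw [← h1]
  have := h.elim ((Abelian.Ext.mk₀.{u} (e.toModuleIso.hom)).comp t (zero_add _)) 0
  rw [this, Abelian.Ext.comp_zero]

lemma EV_subsing [Subsingleton X] (i : ℕ) : EV R X N i :=
  subsingleton_of_forall_eq 0 fun t => ext_proj_zero i t

end EVbasic

open CategoryTheory

lemma injDim_of_EV {R : Type u} [CommRing R] (d : ℕ) (N : ModuleCat.{u} R)
    (h : ∀ J : Ideal R, EV R (R ⧸ J) N d) : HasInjectiveDimensionLE N d := by
  induction d generalizing N with
  | zero =>
    have : Module.Baer R N := by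
      intro I g
      have h0 := h I
      rw [EV_zero_iff (Submodule.subtype I) (Submodule.mkQ I) I.injective_subtype
        I.mkQ_surjective (by rw [LinearMap.exact_iff]; simp)] at h0
      obtain ⟨g', hg'⟩ := h0 g
      exact ⟨g', fun x hx => LinearMap.congr_fun hg' ⟨x, hx⟩⟩
    have := this.injective
    rw [Module.injective_iff_injective_object] at this
    simp only [HasInjectiveDimensionLE, zero_add, ← injective_iff_hasInjectiveDimensionLT_one]
    exact this
  | succ n ih =>
    have ei : EnoughInjectives (ModuleCat.{u} R) := inferInstance
    rcases ei.1 N with ⟨I, inj, f, monof⟩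
    let S := ShortComplex.mk f (Limits.cokernel.π f) (Limits.cokernel.condition f)
    have S_exact : S.ShortExact := { exact := ShortComplex.exact_cokernel f }
    have := S_exact.hasInjectiveDimensionLT_X₃_iff n inj
    refine this.1 (ih _ fun J => ?_)
    refine subsingleton_of_forall_eq 0 fun e => ?_
    have hJ : Subsingleton (Abelian.Ext.{u} (ModuleCat.of R (R ⧸ J)) N (n+1+1)) := h J
    obtain ⟨x, rfl⟩ := Abelian.Ext.covariant_sequence_exact₃ _ S_exact e rfl (hJ.elim _ _)
    rw [Abelian.Ext.eq_zero_of_injective (I := I) x, Abelian.Ext.zero_comp]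

lemma EV_of_prime {T : Type u} [CommRing T] [IsNoetherianRing T] [IsLocalRing T] (d : ℕ)
    (h : ∀ i, d ≤ i → EV T (T ⧸ IsLocalRing.maximalIdeal T) T i) (p : Ideal T) (hp : p.IsPrime) :
    ∀ i, d ≤ i → EV T (T ⧸ p) T i := by
  induction p using WellFoundedGT.induction with
  | ind p ih =>
  by_cases hmax : p = IsLocalRing.maximalIdeal T
  · subst hmax; exact h
  obtain ⟨x, hx, hxp⟩ : ∃ x ∈ IsLocalRing.maximalIdeal T, x ∉ p := by
    by_contra! hc
    exact hmax (le_antisymm (IsLocalRing.le_maximalIdeal hp.ne_top) hc)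
  intro i hi
  let J := p ⊔ Ideal.span {x}
  have hJ : ∀ i, d ≤ i → EV T (T ⧸ J) T i := by
    have key := IsNoetherianRing.induction_on_isQuotientEquivQuotientPrime T
      (M := T ⧸ J) inferInstance
      (motive := fun N _ _ _ => (J ≤ Module.annihilator T N) → ∀ i, d ≤ i → EV T N T i)
      (fun N _ _ _ _ _ i _ => EV_subsing i)
      (fun N _ _ _ q e hN i hi => by
        refine EV_congr_left e.symm i (ih q.1 ?_ q.2 i hi)
        rw [e.annihilator_eq, Ideal.annihilator_quotient] at hN
        refine lt_of_le_of_ne (le_sup_left.trans hN) ?_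
        rintro rfl
        exact hxp (hN (Ideal.mem_sup_right (Ideal.mem_span_singleton_self x))))
      (fun N₁ _ _ _ N₂ _ _ _ N₃ _ _ _ f g hf hg hfg h1 h3 hN i hi =>
        EV_middle f g hf hg hfg i
          (h1 (hN.trans (LinearMap.annihilator_le_of_injective f hf)) i hi)
          (h3 (hN.trans (LinearMap.annihilator_le_of_surjective g hg)) i hi))
    exact key (by rw [Ideal.annihilator_quotient])
  have hpJ : p ≤ J := le_sup_left
  let b : (T ⧸ p) →ₗ[T] (T ⧸ J) := Submodule.factor hpJ
  have hsurj := EV_smul_surj (R := T) (N := T) x b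
    (by
      rw [← LinearMap.ker_eq_bot, LinearMap.ker_eq_bot']
      intro m hm
      obtain ⟨m, rfl⟩ := Submodule.mkQ_surjective _ m
      have : p.mkQ (x * m) = 0 := hm
      simp only [Submodule.mkQ_apply, Submodule.Quotient.mk_eq_zero] at this ⊢
      exact (hp.mem_or_mem this).resolve_left hxp)
    (by
      intro m
      obtain ⟨m, rfl⟩ := Submodule.mkQ_surjective _ m
      exact ⟨p.mkQ m, rfl⟩)
    (by
      intro m
      obtain ⟨m, rfl⟩ := Submodule.mkQ_surjective _ m
      have : b (p.mkQ m) = J.mkQ m := rfl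
      rw [this]
      simp only [Submodule.mkQ_apply, Submodule.Quotient.mk_eq_zero]
      rw [Submodule.mem_sup]
      constructor
      · rintro ⟨y, hy, z, hz, rfl⟩
        rw [Ideal.mem_span_singleton'] at hz
        obtain ⟨a, rfl⟩ := hz
        refine ⟨p.mkQ a, ?_⟩
        have : p.mkQ (x * a) = p.mkQ (y + a * x) := by
          rw [← sub_eq_zero, ← map_sub]
          simp only [Submodule.mkQ_apply, Submodule.Quotient.mk_eq_zero]
          rw [show x * a - (y + a * x) = - y by ring]
          exact p.neg_mem hy
        exact this
      · rintro ⟨a, ha⟩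
        obtain ⟨a, rfl⟩ := Submodule.mkQ_surjective _ a
        have : p.mkQ (x * a) = p.mkQ m := ha
        rw [← sub_eq_zero, ← map_sub] at this
        simp only [Submodule.mkQ_apply, Submodule.Quotient.mk_eq_zero] at this
        exact ⟨m - x * a, by rw [← neg_sub]; exact p.neg_mem this, x * a,
          Ideal.mul_mem_right _ _ (Ideal.mem_span_singleton_self x), by ring⟩)
    i (hJ (i + 1) (by omega))
  have : Module.Finite T (Abelian.Ext.{u} (ModuleCat.of T (T ⧸ p)) (ModuleCat.of T T) (i + 1)) :=
    ModuleCat.finite_ext T _ _ _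
  have hbot := Submodule.eq_bot_of_le_smul_of_le_jacobson_bot (IsLocalRing.maximalIdeal T)
    (⊤ : Submodule T (Abelian.Ext.{u} (ModuleCat.of T (T ⧸ p)) (ModuleCat.of T T) (i + 1)))
    this.1 (by
      intro e _
      obtain ⟨e', rfl⟩ := hsurj e
      exact Submodule.smul_mem_smul hx trivial) (IsLocalRing.maximalIdeal_le_jacobson _)
  exact (Submodule.subsingleton_iff T).1 (subsingleton_of_bot_eq_top hbot.symm)

lemma EV_of_residue {T : Type u} [CommRing T] [IsNoetherianRing T] [IsLocalRing T] (d : ℕ)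
    (h : ∀ i, d ≤ i → EV T (T ⧸ IsLocalRing.maximalIdeal T) T i)
    (X : Type u) [AddCommGroup X] [Module T X] [Module.Finite T X] :
    ∀ i, d ≤ i → EV T X T i := by
  intro i hi
  exact IsNoetherianRing.induction_on_isQuotientEquivQuotientPrime T
      (M := X) inferInstance
      (motive := fun N _ _ _ => EV T N T i)
      (fun N _ _ _ _ => EV_subsing i)
      (fun N _ _ _ q e => EV_congr_left e.symm i (EV_of_prime d h _ q.2 i hi))
      (fun N₁ _ _ _ N₂ _ _ _ N₃ _ _ _ f g hf hg hfg h1 h3 => EV_middle f g hf hg hfg i h1 h3)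

open CategoryTheory
open scoped TensorProduct

section
variable {R : Type u} [CommRing R] {X N N' : Type u} [AddCommGroup X] [Module R X]
  [AddCommGroup N] [Module R N] [AddCommGroup N'] [Module R N']
lemma EV_congr_right (e : N ≃ₗ[R] N') (i : ℕ) (h : EV R X N i) : EV R X N' i := by
  refine subsingleton_of_forall_eq 0 fun t => ?_
  have h1 : ((t.comp (Abelian.Ext.mk₀.{u} (e.toModuleIso.inv)) (add_zero _)).comp
    (Abelian.Ext.mk₀.{u} (e.toModuleIso.hom)) (add_zero _)) = t := by
    rw [Abelian.Ext.comp_assoc_of_second_deg_zero, Abelian.Ext.mk₀_comp_mk₀]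
    rw [Iso.inv_hom_id, Abelian.Ext.comp_mk₀_id]
  rw [← h1]
  have := h.elim (t.comp (Abelian.Ext.mk₀.{u} (e.toModuleIso.inv)) (add_zero _)) 0
  rw [this, Abelian.Ext.zero_comp]
end

section FB
variable {R : Type u} [CommRing R] (R' : Type u) [CommRing R'] [Algebra R R'] [Module.Flat R R']
variable {X Y P N : Type u} [AddCommGroup X] [Module R X]
  [AddCommGroup Y] [Module R Y] [AddCommGroup P] [Module R P] [AddCommGroup N] [Module R N]

lemma surj_hom_baseChange_iff [Module.FinitePresentation R Y] [Module.FinitePresentation R P]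
    (a : Y →ₗ[R] P) :
    Function.Surjective (LinearMap.lcomp R' (R' ⊗[R] N) (a.baseChange R')) ↔
      Function.Surjective ((LinearMap.lcomp R N a).lTensor R') := by
  let e1 := (Module.FinitePresentation.isBaseChange_map R P N R').equiv
  let e2 := (Module.FinitePresentation.isBaseChange_map R Y N R').equiv
  have hc : (LinearMap.lcomp R' (R' ⊗[R] N) (a.baseChange R')) ∘ₗ e1.toLinearMap =
      e2.toLinearMap ∘ₗ ((LinearMap.lcomp R N a).baseChange R') := by
    refine TensorProduct.AlgebraTensorModule.curry_injective (LinearMap.ext fun s => LinearMap.ext fun f => ?_)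
    refine TensorProduct.AlgebraTensorModule.curry_injective (LinearMap.ext fun s' => LinearMap.ext fun y => ?_)
    simp [e1, e2, IsBaseChange.equiv_tmul]
  have hc' : (LinearMap.lcomp R' (R' ⊗[R] N) (a.baseChange R')) ∘ e1 =
      e2 ∘ ((LinearMap.lcomp R N a).lTensor R') := by
    funext t; exact LinearMap.congr_fun hc t
  constructor
  · intro h
    have := h.comp e1.surjective
    rw [hc'] at this
    exact (e2.toEquiv.comp_surjective _).1 this
  · intro h
    have := (e2.toEquiv.comp_surjective _).2 h
    rw [← Function.Surjective.of_comp_iff _ e1.surjective, hc']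
    exact this

lemma EV_baseChange' [IsNoetherianRing R] [Module.Finite R X] (i : ℕ) :
    (EV R X N i → EV R' (R' ⊗[R] X) (R' ⊗[R] N) i) ∧
    (Module.FaithfullyFlat R R' → EV R' (R' ⊗[R] X) (R' ⊗[R] N) i → EV R X N i) := by
  induction i generalizing X with
  | zero =>
    obtain ⟨P, _, _, _, _, b, hb⟩ := Module.exists_finite_presentation R X
    have : Module.FinitePresentation R P := Module.finitePresentation_of_finite R P
    have : Module.FinitePresentation R (LinearMap.ker b) := Module.finitePresentation_of_finite R _
    have hex : Function.Exact (LinearMap.ker b).subtype b := LinearMap.exact_subtype_ker_map b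
    rw [EV_zero_iff (LinearMap.ker b).subtype b (Submodule.injective_subtype _) hb hex,
      EV_zero_iff ((LinearMap.ker b).subtype.baseChange R') (b.baseChange R')
        (Module.Flat.lTensor_preserves_injective_linearMap _ (Submodule.injective_subtype _))
        (LinearMap.lTensor_surjective _ hb) (lTensor_exact R' hex hb)]
    have key := surj_hom_baseChange_iff R' (N := N) (LinearMap.ker b).subtype
    constructor
    · intro h f
      exact key.2 (LinearMap.lTensor_surjective _ fun f => h f) f
    · intro hff h f
      exact (Module.FaithfullyFlat.lTensor_surjective_iff_surjective R R' _).1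
        (key.1 fun f => h f) f
  | succ i ih =>
    obtain ⟨P, _, _, _, _, b, hb⟩ := Module.exists_finite_presentation R X
    have hex : Function.Exact (LinearMap.ker b).subtype b := LinearMap.exact_subtype_ker_map b
    rw [EV_succ_iff (LinearMap.ker b).subtype b (Submodule.injective_subtype _) hb hex,
      EV_succ_iff ((LinearMap.ker b).subtype.baseChange R') (b.baseChange R')
        (Module.Flat.lTensor_preserves_injective_linearMap _ (Submodule.injective_subtype _))
        (LinearMap.lTensor_surjective _ hb) (lTensor_exact R' hex hb)]
    exact ih

lemma EV_baseChange [IsNoetherianRing R] [Module.Finite R X] (i : ℕ) (h : EV R X R i) :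
    EV R' (R' ⊗[R] X) R' i :=
  EV_congr_right (TensorProduct.AlgebraTensorModule.rid R R' R') i ((EV_baseChange' R' i).1 h)

lemma EV_descent [IsNoetherianRing R] [Module.Finite R X] [hf : Module.FaithfullyFlat R R'] (i : ℕ)
    (h : EV R' (R' ⊗[R] X) R' i) : EV R X R i :=
  (EV_baseChange' R' i).2 hf
    (EV_congr_right (TensorProduct.AlgebraTensorModule.rid R R' R').symm i h)
end FB

open CategoryTheory
open scoped TensorProduct

section Hopf
variable {k : Type u'} [Field k] {H : Type u} [CommRing H] [HopfAlgebra k H]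
variable {C : Type u} [CommRing C] [Algebra k C]

/-- `h ↦ ∑ φ(h₂) ⊗ h₁`. -/
noncomputable def dH (φ : H →ₐ[k] C) : H →ₐ[k] C ⊗[k] H :=
  (Algebra.TensorProduct.map φ (AlgHom.id k H)).comp
    ((Algebra.TensorProduct.comm k H H).toAlgHom.comp (Bialgebra.comulAlgHom k H))

/-- the `C`-linear extension of `dH`. -/
noncomputable def tH (φ : H →ₐ[k] C) : C ⊗[k] H →ₐ[C] C ⊗[k] H :=
  Algebra.TensorProduct.lift (Algebra.ofId C _) (dH φ) (fun _ _ => Commute.all _ _)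

lemma tH_tmul (φ : H →ₐ[k] C) (c : C) (h : H) : tH φ (c ⊗ₜ h) = (c ⊗ₜ 1) * dH φ h := by
  simp [tH, Algebra.ofId_apply]

lemma tH_includeRight (φ : H →ₐ[k] C) (h : H) :
    tH φ (Algebra.TensorProduct.includeRight h) = dH φ h := by
  simp [tH_tmul, ← Algebra.TensorProduct.one_def]

noncomputable def auxF (φ ψ : H →ₐ[k] C) : H ⊗[k] (H ⊗[k] H) →ₗ[k] C ⊗[k] H :=
  (TensorProduct.comm k H C).toLinearMap ∘ₗ (TensorProduct.map LinearMap.id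
    (LinearMap.mul' k C ∘ₗ TensorProduct.map φ.toLinearMap ψ.toLinearMap))

lemma tH_dH_aux (φ ψ : H →ₐ[k] C) (t : H ⊗[k] H) :
    tH φ (Algebra.TensorProduct.map ψ (AlgHom.id k H) (Algebra.TensorProduct.comm k H H t)) =
      auxF φ ψ (TensorProduct.assoc k H H H ((Coalgebra.comul (R := k)).rTensor H t)) := by
  induction t using TensorProduct.induction_on with
  | zero => simp
  | add x y hx hy => simp only [map_add, hx, hy]
  | tmul a c =>
    simp only [Algebra.TensorProduct.comm_tmul, Algebra.TensorProduct.map_tmul, AlgHom.id_apply,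
      tH_tmul, LinearMap.rTensor_tmul, dH, AlgHom.comp_apply, Bialgebra.comulAlgHom_apply]
    generalize (Coalgebra.comul (R := k) a) = t
    induction t using TensorProduct.induction_on with
    | zero => simp
    | add x y hx hy => simp only [map_add, mul_add, TensorProduct.add_tmul, hx, hy]
    | tmul a b => simp [auxF, mul_comm]

lemma tH_dH (φ ψ : H →ₐ[k] C)
    (hc : ∀ h : H, LinearMap.mul' k C (TensorProduct.map φ.toLinearMap ψ.toLinearMap
      (Coalgebra.comul (R := k) h)) = algebraMap k C (Coalgebra.counit h)) (h : H) :
    tH φ (dH ψ h) = 1 ⊗ₜ h := by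
  have h1 := tH_dH_aux φ ψ (Coalgebra.comul (R := k) h)
  rw [Coalgebra.coassoc_apply] at h1
  have h2 : dH ψ h = Algebra.TensorProduct.map ψ (AlgHom.id k H)
    (Algebra.TensorProduct.comm k H H (Coalgebra.comul (R := k) h)) := rfl
  rw [h2, h1]
  have h3 : ∀ t : H ⊗[k] H, auxF φ ψ ((Coalgebra.comul (R := k)).lTensor H t) =
      (TensorProduct.comm k H C) ((Algebra.linearMap k C).lTensor H
        ((Coalgebra.counit (R := k)).lTensor H t)) := by
    intro t
    induction t using TensorProduct.induction_on with
    | zero => simp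
    | add x y hx hy => simp only [map_add, hx, hy]
    | tmul a c => simp [auxF, hc]
  rw [h3, Coalgebra.lTensor_counit_comul]
  simp

variable (π : H →ₐ[k] C)

/-- `h ↦ ∑ π(S h₂) ⊗ h₁`. -/
noncomputable def rH : H →ₐ[k] C ⊗[k] H := dH (π.comp (HopfAlgebra.antipodeAlgHom k H))

lemma conv1 (h : H) : LinearMap.mul' k C (TensorProduct.map π.toLinearMap
    (π.comp (HopfAlgebra.antipodeAlgHom k H)).toLinearMap
      (Coalgebra.comul (R := k) h)) = algebraMap k C (Coalgebra.counit h) := by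
  have := congrArg π (HopfAlgebra.mul_antipode_lTensor_comul_apply (R := k) h)
  rw [AlgHom.commutes] at this
  rw [← this]
  generalize (Coalgebra.comul (R := k) h) = t
  induction t using TensorProduct.induction_on with
  | zero => simp
  | add x y hx hy => simp only [map_add, hx, hy]
  | tmul a c => simp

lemma conv2 (h : H) : LinearMap.mul' k C (TensorProduct.map 
    (π.comp (HopfAlgebra.antipodeAlgHom k H)).toLinearMap π.toLinearMap
      (Coalgebra.comul (R := k) h)) = algebraMap k C (Coalgebra.counit h) := by
  have := congrArg π (HopfAlgebra.mul_antipode_rTensor_comul_apply (R := k) h)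
  rw [AlgHom.commutes] at this
  rw [← this]
  generalize (Coalgebra.comul (R := k) h) = t
  induction t using TensorProduct.induction_on with
  | zero => simp
  | add x y hx hy => simp only [map_add, hx, hy]
  | tmul a c => simp

lemma tH_rH (h : H) : tH π (rH π h) = 1 ⊗ₜ h := tH_dH _ _ (conv1 π) h

lemma tHS_dH (h : H) : tH (π.comp (HopfAlgebra.antipodeAlgHom k H)) (dH π h) = 1 ⊗ₜ h :=
  tH_dH _ _ (conv2 π) h

lemma tH_left (x : C ⊗[k] H) :
    tH π (tH (π.comp (HopfAlgebra.antipodeAlgHom k H)) x) = x := by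
  have : (tH π).comp (tH (π.comp (HopfAlgebra.antipodeAlgHom k H))) = AlgHom.id C _ := by
    ext h
    change tH π (tH _ (Algebra.TensorProduct.includeRight h)) = 1 ⊗ₜ h
    rw [tH_includeRight]
    exact tH_rH π h
  exact DFunLike.congr_fun this x

lemma tH_right (x : C ⊗[k] H) :
    tH (π.comp (HopfAlgebra.antipodeAlgHom k H)) (tH π x) = x := by
  have : (tH (π.comp (HopfAlgebra.antipodeAlgHom k H))).comp (tH π) = AlgHom.id C _ := by
    ext h
    change tH _ (tH π (Algebra.TensorProduct.includeRight h)) = 1 ⊗ₜ h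
    rw [tH_includeRight]
    exact tHS_dH π h
  exact DFunLike.congr_fun this x

variable (k H C) in
lemma includeRight_flat : (Algebra.TensorProduct.includeRight : H →ₐ[k] C ⊗[k] H).toRingHom.Flat := by
  have : Module.Flat k C := inferInstance
  have := Module.Flat.baseChange k H C
  rw [RingHom.Flat]
  let _ := (Algebra.TensorProduct.includeRight : H →ₐ[k] C ⊗[k] H).toRingHom.toAlgebra
  refine Module.Flat.of_linearEquiv (M := H ⊗[k] C) ?_
  exact { (TensorProduct.comm k C H) with
    map_smul' := by
      intro h x
      induction x using TensorProduct.induction_on with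
      | zero => simp
      | add x y hx hy => rw [smul_add]; simp_all
      | tmul a c => simp [RingHom.smul_toAlgebra, TensorProduct.smul_tmul'] }

lemma rH_flat : (rH π).toRingHom.Flat := by
  have h1 := includeRight_flat k H C
  have h2 : ((tH (π.comp (HopfAlgebra.antipodeAlgHom k H))).toRingHom).Flat :=
    RingHom.Flat.of_bijective ⟨Function.LeftInverse.injective (tH_left π),
      Function.RightInverse.surjective (tH_right π)⟩
  have h3 := h1.comp h2
  convert h3
  ext h
  exact (tH_includeRight _ h).symm

/-- `c ⊗ h ↦ c π(h)`. -/
noncomputable def nuH : C ⊗[k] H →ₐ[C] C :=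
  Algebra.TensorProduct.lift (AlgHom.id C C) π (fun _ _ => Commute.all _ _)

@[simp] lemma nuH_tmul (c : C) (h : H) : nuH π (c ⊗ₜ h) = c * π h := by simp [nuH]

lemma nuH_rH (h : H) : nuH π (rH π h) = algebraMap k C (Coalgebra.counit h) := by
  rw [← conv1 π h]
  have h2 : rH π h = Algebra.TensorProduct.map (π.comp (HopfAlgebra.antipodeAlgHom k H))
    (AlgHom.id k H) (Algebra.TensorProduct.comm k H H (Coalgebra.comul (R := k) h)) := rfl
  rw [h2]
  generalize (Coalgebra.comul (R := k) h) = t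
  induction t using TensorProduct.induction_on with
  | zero => simp
  | add x y hx hy => simp only [map_add, hx, hy]
  | tmul a c => simp [mul_comm]

variable (k H) in
/-- augmentation ideal -/
noncomputable def augH : Ideal H := RingHom.ker (Bialgebra.counitAlgHom k H)

lemma nuH_ker : RingHom.ker (nuH π) = (augH k H).map (rH π) := by
  set J := (augH k H).map (rH π) with hJ
  have hq : ∀ h : H, Ideal.Quotient.mk J (rH π h) = Ideal.Quotient.mk J (algebraMap k _ (Coalgebra.counit h)) := by
    intro h
    rw [Ideal.Quotient.mk_eq_mk_iff_sub_mem]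
    have : h - algebraMap k H (Coalgebra.counit h) ∈ augH k H := by
      rw [augH, RingHom.mem_ker]
      simp
    have := Ideal.mem_map_of_mem (rH π) this
    simpa using this
  have hq2 : ∀ t : H ⊗[k] H, Ideal.Quotient.mk J (tH (π.comp (HopfAlgebra.antipodeAlgHom k H))
      (Algebra.TensorProduct.map π (AlgHom.id k H) (Algebra.TensorProduct.comm k H H t))) =
      Ideal.Quotient.mk J
      (π (TensorProduct.lid k H ((Coalgebra.counit (R := k)).rTensor H t)) ⊗ₜ 1) := by
    intro t
    induction t using TensorProduct.induction_on with
    | zero => simp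
    | add x y hx hy => simp only [map_add, hx, hy, TensorProduct.add_tmul]
    | tmul a c =>
      simp only [Algebra.TensorProduct.comm_tmul, Algebra.TensorProduct.map_tmul, AlgHom.id_apply,
        tH_tmul]
      rw [map_mul]
      have := hq a
      rw [rH] at this
      rw [this, ← map_mul]
      congr 1
      simp [Algebra.TensorProduct.algebraMap_apply, Algebra.smul_def, mul_comm]
  have hq3 : ∀ h : H, Ideal.Quotient.mk J ((1:C) ⊗ₜ[k] h) = Ideal.Quotient.mk J (π h ⊗ₜ 1) := by
    intro h
    rw [← tHS_dH π h]
    have := hq2 (Coalgebra.comul (R := k) h)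
    rw [Coalgebra.rTensor_counit_comul] at this
    rw [TensorProduct.lid_tmul, one_smul] at this
    exact this
  have hq4 : ∀ x, Ideal.Quotient.mk J x = Ideal.Quotient.mk J (nuH π x ⊗ₜ 1) := by
    intro x
    induction x using TensorProduct.induction_on with
    | zero => simp
    | add x y hx hy => simp only [map_add, hx, hy, TensorProduct.add_tmul]
    | tmul c h =>
      have : c ⊗ₜ[k] h = (c ⊗ₜ[k] 1) * ((1:C) ⊗ₜ[k] h) := by simp
      rw [this, map_mul, hq3, ← map_mul]
      simp
  apply le_antisymm
  · intro x hx
    have := hq4 x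
    rw [(RingHom.mem_ker).1 hx] at this
    simpa [Ideal.Quotient.eq_zero_iff_mem] using this
  · rw [Ideal.map_le_iff_le_comap]
    intro h hh
    rw [Ideal.mem_comap, RingHom.mem_ker, nuH_rH]
    have : Coalgebra.counit (R := k) h = 0 := hh
    rw [this, map_zero]

lemma nuH_surj : Function.Surjective (nuH π) := fun c => ⟨c ⊗ₜ 1, by simp⟩

end Hopf

open CategoryTheory
open scoped TensorProduct

section L1
variable {k : Type u'} [Field k] {H : Type u} [CommRing H] [HopfAlgebra k H] [IsNoetherianRing H]

lemma kaehler_fg : (KaehlerDifferential.ideal k H).FG := by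
  have h1 := nuH_ker (AlgHom.id k H)
  have h2 : KaehlerDifferential.ideal k H = RingHom.ker (nuH (AlgHom.id k H)) := by
    ext x
    rw [KaehlerDifferential.ideal, RingHom.mem_ker, RingHom.mem_ker]
    have : nuH (AlgHom.id k H) x = Algebra.TensorProduct.lmul' (S := H) k x := by
      induction x using TensorProduct.induction_on with
      | zero => simp
      | add x y hx hy => simp only [map_add, hx, hy]
      | tmul c h => simp
    rw [this]
  rw [h2, h1]
  exact Ideal.FG.map (IsNoetherian.noetherian (augH k H)) (rH (AlgHom.id k H)).toRingHom

lemma essFinite_of_gen {K : Type u} [Field K] [Algebra k K] (π : H →ₐ[k] K)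
    (hgen : ∀ L : IntermediateField k K, (∀ h, π h ∈ L) → L = ⊤) : Algebra.EssFiniteType k K := by
  have hfg := kaehler_fg (k := k) (H := H)
  rw [← KaehlerDifferential.span_range_eq_ideal] at hfg
  replace hfg := (Submodule.fg_span_iff_fg_span_finset_subset _).1 hfg
  obtain ⟨s, hs, hspan⟩ := hfg
  choose f hf using fun x : s => hs x.2
  let t : Set K := Set.range fun x => π (f x)
  let L := IntermediateField.adjoin k t
  have hL : L = ⊤ := by
    apply hgen
    intro h
    let Φ : H ⊗[k] H →ₐ[k] K ⊗[L] K := Algebra.TensorProduct.lift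
      ((Algebra.TensorProduct.includeLeft (R := L) (S := k)).comp π)
      (((Algebra.TensorProduct.includeRight (R := L) (A := K) (B := K)).restrictScalars k).comp π)
      (fun _ _ => Commute.all _ _)
    have hΦ : ∀ h : H, Φ ((1 : H) ⊗ₜ[k] h - h ⊗ₜ[k] (1 : H)) = 1 ⊗ₜ π h - π h ⊗ₜ 1 := by
      intro h
      simp [Φ]
    have hker : Submodule.span (H ⊗[k] H) (s : Set (H ⊗[k] H)) ≤ RingHom.ker Φ := by
      rw [Submodule.span_le]
      intro x hx
      have h1 := hf ⟨x, hx⟩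
      dsimp only at h1
      rw [← h1, SetLike.mem_coe, RingHom.mem_ker, hΦ]
      let y : L := ⟨π (f ⟨x, hx⟩), IntermediateField.subset_adjoin _ _ ⟨_, rfl⟩⟩
      have hy : π (f ⟨x, hx⟩) = y • (1 : K) := by
        rw [Algebra.smul_def, mul_one]; rfl
      rw [hy, TensorProduct.tmul_smul, TensorProduct.smul_tmul', sub_self]
    have h1 : (1 : H) ⊗ₜ[k] h - h ⊗ₜ[k] (1 : H) ∈ RingHom.ker Φ :=
      hker (hspan ▸ Submodule.subset_span ⟨h, rfl⟩)
    rw [RingHom.mem_ker, hΦ, sub_eq_zero] at h1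
    by_contra hcon
    have hn : π h ∉ (1 : Submodule L K) := by
      rw [Submodule.mem_one]
      rintro ⟨y, hy⟩
      apply hcon
      rw [← hy]
      exact y.2
    obtain ⟨g, hg, hg1⟩ := Submodule.exists_le_ker_of_notMem hn
    have h2 := congrArg (fun z => TensorProduct.rid L K (g.lTensor K z)) h1
    have h3 : g 1 = 0 := hg1 (Submodule.one_le.1 le_rfl)
    simp only [LinearMap.lTensor_tmul, TensorProduct.rid_tmul, h3, zero_smul] at h2
    apply hg
    rw [Algebra.smul_def, mul_one] at h2
    exact (map_eq_zero (algebraMap L K)).1 h2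
  rw [← IntermediateField.fg_top_iff, ← hL]
  refine IntermediateField.fg_adjoin_of_finite (Set.finite_range _)
end L1

open CategoryTheory
open scoped TensorProduct

section
variable {R R' : Type u} [CommRing R] [CommRing R'] [IsNoetherianRing R]

lemma EV_baseChange_hom (f : R →+* R') (hf : f.Flat) (J : Ideal R) (i : ℕ)
    (h : EV R (R ⧸ J) R i) : EV R' (R' ⧸ J.map f) R' i := by
  let _ := f.toAlgebra
  have : Module.Flat R R' := hf
  exact EV_congr_left (Algebra.TensorProduct.quotIdealMapEquivTensorQuot R' J).symm.toLinearEquiv i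
    (EV_baseChange R' i h)

lemma EV_descent_hom [IsLocalRing R] [IsLocalRing R'] (f : R →+* R') (hf : f.Flat) [IsLocalHom f]
    (i : ℕ) (h : ∀ (X : Type u) [AddCommGroup X] [Module R' X] [Module.Finite R' X], EV R' X R' i)
    (X : Type u) [AddCommGroup X] [Module R X] [Module.Finite R X] : EV R X R i := by
  let _ := f.toAlgebra
  have : Module.Flat R R' := hf
  have : IsLocalHom (algebraMap R R') := ‹IsLocalHom f›
  have := Module.FaithfullyFlat.of_flat_of_isLocalHom (A := R) (B := R')
  exact EV_descent R' i (h _)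

/-- local criterion -/
lemma injDim_local {S : Type u} [CommRing S] [IsNoetherianRing S] (d : ℕ)
    (ρ ι : R →+* S) (hρ : ρ.Flat) (hι : ι.Flat) (J : Ideal R)
    (hE : ∀ i, d ≤ i → EV R (R ⧸ J) R i) (n' : Ideal S) [n'.IsMaximal] (hn : n' = J.map ρ)
    (n : Ideal R) [n.IsPrime] (hc : n = n'.comap ι) (X : Type u) [AddCommGroup X]
    [Module (Localization.AtPrime n) X] [Module.Finite (Localization.AtPrime n) X] :
    EV (Localization.AtPrime n) X (Localization.AtPrime n) d := by
  let T := Localization.AtPrime n'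
  have hT : ∀ i, d ≤ i → EV T (T ⧸ IsLocalRing.maximalIdeal T) T i := by
    intro i hi
    have h1 : ((algebraMap S T).comp ρ).Flat := hρ.comp (RingHom.flat_algebraMap_iff.2 (IsLocalization.flat T n'.primeCompl))
    have h2 := EV_baseChange_hom ((algebraMap S T).comp ρ) h1 J i (hE i hi)
    have h3 : J.map ((algebraMap S T).comp ρ) = IsLocalRing.maximalIdeal T := by
      rw [← Ideal.map_map, ← hn, Localization.AtPrime.map_eq_maximalIdeal]
    rw [h3] at h2
    exact h2
  have hT2 := EV_of_residue d hT
  have := Localization.isLocalHom_localRingHom n n' ι hc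
  exact EV_descent_hom (Localization.localRingHom n n' ι hc) (RingHom.Flat.localRingHom hι n' n hc) d
    (fun X _ _ _ => hT2 X d le_rfl) X
end

section
variable {k : Type u'} [Field k] {H : Type u} [CommRing H] [HopfAlgebra k H] [IsNoetherianRing H]

lemma tensor_noeth (K : Type u) [Field K] [Algebra k K] [Algebra.EssFiniteType k K] :
    IsNoetherianRing (K ⊗[k] H) := by
  have : Algebra.EssFiniteType H (H ⊗[k] K) := inferInstance
  have : IsNoetherianRing (H ⊗[k] K) := Algebra.EssFiniteType.isNoetherianRing H _
  exact isNoetherianRing_of_ringEquiv (H ⊗[k] K) (Algebra.TensorProduct.comm k H K).toRingEquiv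

lemma partII_gen (d : ℕ) (hE : ∀ i, d ≤ i → EV H (H ⧸ augH k H) H i)
    (K : Type u) [Field K] [Algebra k K] (π : H →ₐ[k] K) (hπ : Function.Surjective π)
    (n : Ideal H) [n.IsPrime] (hn : n = RingHom.ker π)
    (X : Type u) [AddCommGroup X]
    [Module (Localization.AtPrime n) X] [Module.Finite (Localization.AtPrime n) X] :
    EV (Localization.AtPrime n) X (Localization.AtPrime n) d := by
  have : Algebra.EssFiniteType k K := essFinite_of_gen π (fun L hL => by
    rw [eq_top_iff]; intro x _; obtain ⟨h, rfl⟩ := hπ x; exact hL h)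
  have := tensor_noeth (k := k) (H := H) K
  have : (RingHom.ker (nuH π)).IsMaximal := RingHom.ker_isMaximal_of_surjective _ (nuH_surj π)
  refine injDim_local (S := K ⊗[k] H) d (rH π).toRingHom
    (Algebra.TensorProduct.includeRight : H →ₐ[k] K ⊗[k] H).toRingHom (rH_flat π)
    (includeRight_flat k H K) (augH k H) hE (RingHom.ker (nuH π)) (nuH_ker π) n ?_ X
  rw [hn]
  ext x
  simp [RingHom.mem_ker]

lemma partII (d : ℕ) (hE : ∀ i, d ≤ i → EV H (H ⧸ augH k H) H i) :
    HasInjectiveDimensionLE (ModuleCat.of H H) d := by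
  rw [ModuleCat.hasInjectiveDimensionLE_iff_forall_maximalSpectrum]
  intro m
  have := m.2
  let _ := Ideal.Quotient.field m.1
  have h1 := partII_gen d hE (H ⧸ m.1) (Ideal.Quotient.mkₐ k m.1) Ideal.Quotient.mk_surjective m.1
    (by ext x; simp [RingHom.mem_ker, Ideal.Quotient.eq_zero_iff_mem])
  have h2 := injDim_of_EV d (ModuleCat.of (Localization.AtPrime m.1) (Localization.AtPrime m.1))
    (fun J => h1 _)
  refine (ModuleCat.hasInjectiveDimensionLE_iff_of_linearEquiv ?_ d).1 h2
  have := ModuleCat.localizedModule_isLocalizedModule (ModuleCat.of H H) m.1.primeCompl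
  exact LinearEquiv.extendScalarsOfIsLocalization m.1.primeCompl (Localization.AtPrime m.1)
    (IsLocalizedModule.linearEquiv m.1.primeCompl (Algebra.linearMap H (Localization.AtPrime m.1))
      (M'' := (ModuleCat.of H H).localizedModule m.1.primeCompl)
      ((ModuleCat.of H H).localizedModuleMkLinearMap m.1.primeCompl))
end

open CategoryTheory
open scoped TensorProduct

section
variable {R : Type u} [CommRing R] {X Y P N : Type u} [AddCommGroup X] [Module R X]
  [AddCommGroup Y] [Module R Y] [AddCommGroup P] [Module R P] [AddCommGroup N] [Module R N]

lemma EV_third (a : Y →ₗ[R] P) (b : P →ₗ[R] X)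
    (ha : Function.Injective a) (hb : Function.Surjective b) (hab : Function.Exact a b) (i : ℕ)
    (h1 : EV R Y N i) (h2 : EV R P N (i + 1)) : EV R X N (i + 1) := by
  have hS := se_of_exact a b ha hb hab
  refine subsingleton_of_forall_eq 0 fun e => ?_
  have h' : Subsingleton (Abelian.Ext.{u} (ModuleCat.of R P) (ModuleCat.of R N) (i+1+1)) := h2
  obtain ⟨x, rfl⟩ := Abelian.Ext.contravariant_sequence_exact₃ hS _ e (h'.elim _ _) (n₀ := i + 1) (by ring)
  have := h1.elim x 0
  rw [this, Abelian.Ext.comp_zero]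

/-- Ext vanishing from `n` on for the quotient by the kernel. -/
def ER {A : Type u} {D : Type*} [CommRing A] [CommRing D] (φ : A →+* D) (n : ℕ) : Prop :=
  ∀ i, n ≤ i → EV A (A ⧸ RingHom.ker φ) A i

variable {A A' : Type u} {D : Type*} [CommRing A] [CommRing A'] [CommRing D]

lemma ER_loc [IsNoetherianRing A] (f : A →+* A') (hf : f.Flat) (φ : A →+* D) (φ' : A' →+* D)
    (hc : φ'.comp f = φ) (hd : ∀ x, ∃ a u, IsUnit u ∧ u * x = f a) (n : ℕ) (h : ER φ n) :
    ER φ' n := by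
  intro i hi
  have h1 := EV_baseChange_hom f hf _ i (h i hi)
  have h2 : (RingHom.ker φ).map f = RingHom.ker φ' := by
    apply le_antisymm
    · rw [Ideal.map_le_iff_le_comap]
      intro x hx
      rw [← hc] at hx
      exact hx
    · intro x hx
      obtain ⟨a, u, hu, hxa⟩ := hd x
      have : a ∈ RingHom.ker φ := by
        rw [RingHom.mem_ker, ← hc, RingHom.comp_apply, ← hxa, map_mul, (RingHom.mem_ker).1 hx, mul_zero]
      have := Ideal.mem_map_of_mem f this
      rw [← hxa] at this
      obtain ⟨v, hv⟩ := hu.exists_left_inv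
      have := Ideal.mul_mem_left _ v this
      rwa [← mul_assoc, hv, one_mul] at this
  rw [h2] at h1
  exact h1

lemma ER_equiv [IsNoetherianRing A] (f : A ≃+* A') (φ : A →+* D) (φ' : A' →+* D)
    (hc : φ'.comp f.toRingHom = φ) (n : ℕ) (h : ER φ n) : ER φ' n := by
  refine ER_loc f.toRingHom (RingHom.Flat.of_bijective f.bijective) φ φ' hc (fun x => ?_) n h
  exact ⟨f.symm x, 1, isUnit_one, by simp⟩

lemma ER_zero (φ : A →+* D) (h : Function.Injective φ) : ER φ 0 := by
  intro i _
  have : RingHom.ker φ = ⊥ := (RingHom.injective_iff_ker_eq_bot φ).1 h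
  rw [this]
  have h1 : EV A A A i := subsingleton_of_forall_eq 0 (ext_proj_zero i)
  exact EV_congr_left (Submodule.quotEquivOfEqBot _ rfl).symm i h1

lemma ER_poly [IsNoetherianRing A] (φ : A →+* D) (hφ : Function.Surjective φ) (b : D) (n : ℕ)
    (h : ER φ n) : ER (Polynomial.eval₂RingHom φ b) (n + 1) := by
  obtain ⟨a, rfl⟩ := hφ b
  let ψ := Polynomial.eval₂RingHom φ (φ a)
  let J' : Ideal (Polynomial A) := (RingHom.ker φ).map Polynomial.C
  let y : Polynomial A := Polynomial.X - Polynomial.C a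
  have hJ' : J' = RingHom.ker (Polynomial.mapRingHom φ) := (Polynomial.ker_mapRingHom φ).symm
  have hle : J' ≤ RingHom.ker ψ := by
    rw [Ideal.map_le_iff_le_comap]
    intro x hx
    simpa [ψ, RingHom.mem_ker] using hx
  have hflat : (Polynomial.C : A →+* Polynomial A).Flat := by
    rw [← Polynomial.algebraMap_eq, RingHom.flat_algebraMap_iff]; infer_instance
  have h1 : ∀ i, n ≤ i → EV (Polynomial A) (Polynomial A ⧸ J') (Polynomial A) i := fun i hi =>
    EV_baseChange_hom Polynomial.C hflat _ i (h i hi)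
  intro i hi
  obtain ⟨i, rfl⟩ : ∃ j, i = j + 1 := ⟨i - 1, by omega⟩
  refine EV_third (y • LinearMap.id : (Polynomial A ⧸ J') →ₗ[Polynomial A] (Polynomial A ⧸ J'))
    (Submodule.mapQ J' (RingHom.ker ψ) LinearMap.id hle) ?_ ?_ ?_ i (h1 i (by omega)) (h1 _ (by omega))
  · rw [injective_iff_map_eq_zero]
    intro x hx
    obtain ⟨p, rfl⟩ := Ideal.Quotient.mk_surjective x
    have : Ideal.Quotient.mk J' (y * p) = 0 := hx
    rw [Ideal.Quotient.eq_zero_iff_mem] at this ⊢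
    rw [hJ', RingHom.mem_ker] at this ⊢
    simp only [y, map_mul, map_sub, Polynomial.coe_mapRingHom, Polynomial.map_X, Polynomial.map_C] at this ⊢
    exact (Polynomial.monic_X_sub_C (φ a)).isRegular.left (by simpa using this)
  · intro x
    obtain ⟨p, rfl⟩ := Ideal.Quotient.mk_surjective x
    exact ⟨Ideal.Quotient.mk _ p, rfl⟩
  · intro x
    obtain ⟨p, rfl⟩ := Ideal.Quotient.mk_surjective x
    constructor
    · intro hx
      have hx : Ideal.Quotient.mk (RingHom.ker ψ) p = 0 := hx
      rw [Ideal.Quotient.eq_zero_iff_mem, RingHom.mem_ker] at hx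
      refine ⟨Ideal.Quotient.mk J' (p /ₘ y), ?_⟩
      change Ideal.Quotient.mk J' (y * (p /ₘ y)) = _
      rw [Ideal.Quotient.mk_eq_mk_iff_sub_mem]
      have h3 := Polynomial.modByMonic_add_div p y
      rw [Polynomial.modByMonic_X_sub_C_eq_C_eval] at h3
      have h4 : y * (p /ₘ y) - p = - Polynomial.C (Polynomial.eval a p) := by
        linear_combination h3
      rw [h4]
      refine J'.neg_mem (Ideal.mem_map_of_mem _ ?_)
      rw [RingHom.mem_ker, ← hx]
      simp [ψ]
    · rintro ⟨q, hq⟩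
      obtain ⟨q, rfl⟩ := Ideal.Quotient.mk_surjective q
      rw [← hq]
      change Ideal.Quotient.mk (RingHom.ker ψ) (y * q) = 0
      rw [Ideal.Quotient.eq_zero_iff_mem, RingHom.mem_ker, map_mul]
      simp [y, ψ]

lemma ER_mv {B : Type u} [CommRing B] [IsNoetherianRing B] (n : ℕ) (b : Fin n → B) :
    ER (MvPolynomial.eval b) n := by
  induction n with
  | zero =>
    apply ER_zero
    intro p q hpq
    obtain ⟨r, rfl⟩ := MvPolynomial.C_surjective (Fin 0) p
    obtain ⟨s, rfl⟩ := MvPolynomial.C_surjective (Fin 0) q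
    rw [MvPolynomial.eval_C, MvPolynomial.eval_C] at hpq
    rw [hpq]
  | succ n ih =>
    have h1 := ER_poly _ (fun x => ⟨MvPolynomial.C x, by simp⟩) (b 0) n (ih (fun i => b i.succ))
    refine ER_equiv (MvPolynomial.finSuccEquiv B n).symm.toRingEquiv _ _ ?_ _ h1
    have h2 : (MvPolynomial.eval b) = (Polynomial.eval₂RingHom (MvPolynomial.eval fun i => b i.succ)
        (b 0)).comp (MvPolynomial.finSuccEquiv B n).toRingEquiv.toRingHom := by
      ext i
      · simp [MvPolynomial.finSuccEquiv_apply]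
      · refine Fin.cases ?_ (fun j => ?_) i
        · simp [MvPolynomial.finSuccEquiv_X_zero]
        · simp [MvPolynomial.finSuccEquiv_X_succ]
    rw [h2]
    refine RingHom.ext fun p => ?_
    simp
end

open CategoryTheory
open scoped TensorProduct

section
variable {k : Type u'} [Field k]

lemma ER_mult {B : Type u} [CommRing B] [Algebra k B] [IsNoetherianRing B] (n : ℕ)
    (A0 : Type u) [CommRing A0] [Algebra k A0] (e : MvPolynomial (Fin n) k ≃ₐ[k] A0)
    (L : Type u) [CommRing L] [Algebra k L] [Algebra A0 L] [IsScalarTower k A0 L] (M : Submonoid A0)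
    [IsLocalization M L] (j : L →ₐ[k] B) (μ : L ⊗[k] B →ₐ[k] B)
    (hμ : μ = Algebra.TensorProduct.lift j (AlgHom.id k B) (fun _ _ => Commute.all _ _)) :
    ER μ.toRingHom n := by
  let j0 : A0 →ₐ[k] B := j.comp (IsScalarTower.toAlgHom k A0 L)
  let b : Fin n → B := fun i => j0 (e (MvPolynomial.X i))
  let f1 : MvPolynomial (Fin n) B ≃+* A0 ⊗[k] B :=
    (MvPolynomial.algebraTensorAlgEquiv (σ := Fin n) k B).symm.toRingEquiv.trans
      ((Algebra.TensorProduct.comm k B (MvPolynomial (Fin n) k)).toRingEquiv.trans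
        (Algebra.TensorProduct.congr e AlgEquiv.refl).toRingEquiv)
  let μ0 : A0 ⊗[k] B →ₐ[k] B :=
    Algebra.TensorProduct.lift j0 (AlgHom.id k B) (fun _ _ => Commute.all _ _)
  have h1 : ER μ0.toRingHom n := by
    refine ER_equiv f1 (MvPolynomial.eval b) _ ?_ n (ER_mv n b)
    ext i
    · have h0 : (MvPolynomial.algebraTensorAlgEquiv (σ := Fin n) k B).symm (MvPolynomial.C i) =
          i ⊗ₜ 1 := (MvPolynomial.algebraTensorAlgEquiv (σ := Fin n) k B).symm.commutes i
      simp [f1, μ0, h0]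
    · simp [f1, μ0, b]
  have hN : IsNoetherianRing (A0 ⊗[k] B) := isNoetherianRing_of_ringEquiv _ f1
  let g : A0 ⊗[k] B →ₐ[k] L ⊗[k] B :=
    Algebra.TensorProduct.map (IsScalarTower.toAlgHom k A0 L) (AlgHom.id k B)
  let _ : Algebra (A0 ⊗[k] B) (L ⊗[k] B) := g.toRingHom.toAlgebra
  have hg : algebraMap (A0 ⊗[k] B) (L ⊗[k] B) = g.toRingHom := rfl
  have : IsScalarTower A0 (A0 ⊗[k] B) (L ⊗[k] B) := by
    refine IsScalarTower.of_algebraMap_eq' ?_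
    refine RingHom.ext fun x => ?_
    have h2 : algebraMap A0 (L ⊗[k] B) x = (algebraMap A0 L x) ⊗ₜ 1 := rfl
    have h3 : g ((algebraMap A0 (A0 ⊗[k] B)) x) = g (x ⊗ₜ 1) := rfl
    rw [RingHom.comp_apply, hg, h2]
    refine Eq.trans ?_ h3.symm
    simp [g]
  have hloc : IsLocalization (Algebra.algebraMapSubmonoid (A0 ⊗[k] B) M) (L ⊗[k] B) := by
    refine IsLocalization.tensorProduct_tensorProduct k B M L ?_
    ext x
    simp [hg, g]
  refine ER_loc g.toRingHom (IsLocalization.flat (L ⊗[k] B) (Algebra.algebraMapSubmonoid (A0 ⊗[k] B) M))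
    μ0.toRingHom _ ?_ ?_ n h1
  · have : μ.comp g = μ0 := by
      rw [hμ]
      ext x
      · simp [g, μ0, j0]
      · simp [g, μ0]
    rw [← this]; rfl
  · intro x
    obtain ⟨⟨a, s⟩, hs⟩ := IsLocalization.surj (Algebra.algebraMapSubmonoid (A0 ⊗[k] B) M) x
    exact ⟨a, _, IsLocalization.map_units (L ⊗[k] B) s, by rw [mul_comm]; exact hs⟩
end

section
variable {S S' : Type u} [CommRing S] [CommRing S'] [Algebra S S'] [IsNoetherianRing S]
  (U : Submonoid S) [IsLocalization U S']
variable {X : Type u} [AddCommGroup X] [Module S X] [Module.Finite S X]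
  {N : Type u} [AddCommGroup N] [Module S N]

lemma EV_torsion (i : ℕ) (h : EV S' (S' ⊗[S] X) (S' ⊗[S] N) i)
    (e : Abelian.Ext.{u} (ModuleCat.of S X) (ModuleCat.of S N) (i + 1)) : ∃ u ∈ U, u • e = 0 := by
  have hfl : Module.Flat S S' := IsLocalization.flat S' U
  induction i generalizing X with
  | zero =>
    obtain ⟨P, _, _, _, _, b, hb⟩ := Module.exists_finite_presentation S X
    have : Module.FinitePresentation S P := Module.finitePresentation_of_finite S P
    have : Module.FinitePresentation S (LinearMap.ker b) := Module.finitePresentation_of_finite S _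
    have hex : Function.Exact (LinearMap.ker b).subtype b := LinearMap.exact_subtype_ker_map b
    have hS := se_of_exact (LinearMap.ker b).subtype b (Submodule.injective_subtype _) hb hex
    rw [EV_zero_iff ((LinearMap.ker b).subtype.baseChange S') (b.baseChange S')
        (Module.Flat.lTensor_preserves_injective_linearMap _ (Submodule.injective_subtype _))
        (LinearMap.lTensor_surjective _ hb) (lTensor_exact S' hex hb)] at h
    have hsur := (surj_hom_baseChange_iff S' (N := N) (LinearMap.ker b).subtype).1 h
    obtain ⟨x, rfl⟩ := Abelian.Ext.contravariant_sequence_exact₃ hS _ e (ext_proj_zero _ _) (n₀ := 0) (by ring)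
    obtain ⟨f, rfl⟩ := (Abelian.Ext.mk₀_bijective _ _).2 x
    let f' : LinearMap.ker b →ₗ[S] N := f.hom
    have key : ∃ u ∈ U, ∃ g : P →ₗ[S] N, g ∘ₗ (LinearMap.ker b).subtype = u • f' := by
      obtain ⟨z, hz⟩ := hsur (1 ⊗ₜ f')
      obtain ⟨⟨g, s⟩, hg⟩ := IsLocalizedModule.surj U (TensorProduct.mk S S' (P →ₗ[S] N) 1) z
      simp only [TensorProduct.mk_apply] at hg
      have h2 := congrArg ((LinearMap.lcomp S N (LinearMap.ker b).subtype).lTensor S') hg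
      rw [LinearMap.lTensor_tmul, Submonoid.smul_def, map_smul, hz, ← TensorProduct.tmul_smul] at h2
      obtain ⟨c, hc⟩ := IsLocalizedModule.exists_of_eq (S := U)
        (f := TensorProduct.mk S S' (LinearMap.ker b →ₗ[S] N) 1) h2
      refine ⟨c * s, U.mul_mem c.2 s.2, (c : S) • g, ?_⟩
      rw [mul_smul]
      exact hc.symm
    obtain ⟨u, hu, g, hg⟩ := key
    refine ⟨u, hu, ?_⟩
    rw [← Abelian.Ext.comp_smul, ← Abelian.Ext.mk₀_smul]
    have : u • f = ModuleCat.ofHom (LinearMap.ker b).subtype ≫ ModuleCat.ofHom g := by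
      ext x
      exact (LinearMap.congr_fun hg x).symm
    rw [this, ← Abelian.Ext.mk₀_comp_mk₀]
    exact ShortComplex.ShortExact.extClass_comp_assoc.{u} hS _
  | succ i ih =>
    obtain ⟨P, _, _, _, _, b, hb⟩ := Module.exists_finite_presentation S X
    have hex : Function.Exact (LinearMap.ker b).subtype b := LinearMap.exact_subtype_ker_map b
    have hS := se_of_exact (LinearMap.ker b).subtype b (Submodule.injective_subtype _) hb hex
    rw [EV_succ_iff ((LinearMap.ker b).subtype.baseChange S') (b.baseChange S')
        (Module.Flat.lTensor_preserves_injective_linearMap _ (Submodule.injective_subtype _))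
        (LinearMap.lTensor_surjective _ hb) (lTensor_exact S' hex hb)] at h
    obtain ⟨x, rfl⟩ := Abelian.Ext.contravariant_sequence_exact₃ hS _ e (ext_proj_zero _ _) (n₀ := i + 1) (by ring)
    obtain ⟨u, hu, hx⟩ := ih h x
    refine ⟨u, hu, ?_⟩
    rw [← Abelian.Ext.comp_smul, hx, Abelian.Ext.comp_zero]

lemma EV_clear (hU : ∀ u ∈ U, Function.Bijective (fun x : X => u • x)) (i : ℕ)
    (h : EV S' (S' ⊗[S] X) (S' ⊗[S] N) i) : EV S X N i := by
  refine subsingleton_of_forall_eq 0 fun e => ?_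
  obtain ⟨u, hu, he⟩ := EV_torsion U i h e
  let w0 : X ≃ₗ[S] X := LinearEquiv.ofBijective (u • LinearMap.id) (hU u hu)
  let w : ModuleCat.of S X ⟶ ModuleCat.of S X := ModuleCat.ofHom w0.symm.toLinearMap
  have hw : u • w = 𝟙 _ := by
    ext x
    exact w0.apply_symm_apply x
  have h1 : (Abelian.Ext.mk₀.{u} (u • w)).comp e (zero_add _) = e := by
    rw [hw, Abelian.Ext.mk₀_id_comp]
  rw [← h1, Abelian.Ext.mk₀_smul, Abelian.Ext.smul_comp, ← Abelian.Ext.comp_smul, he,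
    Abelian.Ext.comp_zero]
end

open CategoryTheory
open scoped TensorProduct

section
variable {S S' : Type u} [CommRing S] [CommRing S'] [Algebra S S'] [IsNoetherianRing S]
  {B : Type u} [CommRing B]

lemma EV_of_ER (U : Submonoid S) [IsLocalization U S'] (μ : S' →+* B) (hμ : Function.Surjective μ) (i : ℕ)
    (h : EV S' (S' ⧸ RingHom.ker μ) S' i)
    (X : Type u) [AddCommGroup X] [Module S X] [Module.Finite S X] (ε : X ≃+ B)
    (hε : ∀ s x, ε (s • x) = μ (algebraMap S S' s) * ε x) : EV S X S i := by
  have hu : ∀ u ∈ U, IsUnit (μ (algebraMap S S' u)) := fun u hu =>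
    (IsLocalization.map_units S' ⟨u, hu⟩).map μ
  let e1 : (S' ⧸ RingHom.ker μ) ≃+* B := RingHom.quotientKerEquivOfSurjective hμ
  have he1 : ∀ (s : S) (y : S' ⧸ RingHom.ker μ), e1 (s • y) = μ (algebraMap S S' s) * e1 y := by
    intro s y
    obtain ⟨y, rfl⟩ := Ideal.Quotient.mk_surjective y
    have : s • Ideal.Quotient.mk (RingHom.ker μ) y = Ideal.Quotient.mk (RingHom.ker μ) (algebraMap S S' s * y) := by
      rw [← Algebra.smul_def]; rfl
    rw [this, map_mul, map_mul]; rfl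
  let f : X ≃ₗ[S] (S' ⧸ RingHom.ker μ) :=
    { ε.trans e1.symm.toAddEquiv with
      map_smul' := by
        intro s x
        apply e1.injective
        simp [hε, he1] }
  have bij : ∀ u ∈ U, Function.Bijective (fun x : X => u • x) := by
    intro u hu'
    have := ε.symm.bijective.comp ((IsUnit.isUnit_iff_mulLeft_bijective.1 (hu u hu')).comp ε.bijective)
    convert this using 1
    funext x
    apply ε.injective
    simp [hε]
  have bij2 : ∀ u ∈ U, Function.Bijective (fun x : S' ⧸ RingHom.ker μ => u • x) := by
    intro u hu'
    have := f.bijective.comp ((bij u hu').comp f.symm.bijective)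
    convert this using 1
    funext x
    simp
  have hloc : IsLocalizedModule U f.toLinearMap :=
    { map_units := fun u => (Module.End.isUnit_iff _).2 (bij2 u u.2)
      surj := fun y => ⟨⟨f.symm y, 1⟩, by simp⟩
      exists_of_eq := fun {x y} hxy => ⟨1, by rw [f.injective hxy]⟩ }
  refine EV_clear (S' := S') U bij i ?_
  refine EV_congr_right (TensorProduct.AlgebraTensorModule.rid S S' S').symm i ?_
  exact EV_congr_left (IsLocalizedModule.isBaseChange U S' f.toLinearMap).equiv.symm i h
end

section
variable {k : Type u'} [Field k] {H : Type u} [CommRing H] [Algebra k H]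

attribute [local instance] Algebra.TensorProduct.rightAlgebra in
lemma EV_SB {B : Type u} [CommRing B] [Algebra k B] [IsNoetherianRing B] (n : ℕ)
    (A0 : Type u) [CommRing A0] [Algebra k A0] (e : MvPolynomial (Fin n) k ≃ₐ[k] A0)
    (L : Type u) [CommRing L] [Algebra k L] [Algebra A0 L] [IsScalarTower k A0 L] (M : Submonoid A0)
    [IsLocalization M L] (j : L →ₐ[k] B)
    [Algebra H B] [IsScalarTower k H B] (U0 : Submonoid H) [IsLocalization U0 B]
    [IsNoetherianRing (L ⊗[k] H)]
    (X : Type u) [AddCommGroup X] [Module (L ⊗[k] H) X] [Module.Finite (L ⊗[k] H) X] (ε : X ≃+ B)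
    (hε : ∀ l h x, ε ((l ⊗ₜ h : L ⊗[k] H) • x) = j l * algebraMap H B h * ε x) (i : ℕ) (hi : n ≤ i) :
    EV (L ⊗[k] H) X (L ⊗[k] H) i := by
  let μ : L ⊗[k] B →ₐ[k] B :=
    Algebra.TensorProduct.lift j (AlgHom.id k B) (fun _ _ => Commute.all _ _)
  have h1 := ER_mult n A0 e L M j μ rfl i hi
  let g : L ⊗[k] H →ₐ[L] L ⊗[k] B :=
    Algebra.TensorProduct.map (AlgHom.id L L) (IsScalarTower.toAlgHom k H B)
  let _ : Algebra (L ⊗[k] H) (L ⊗[k] B) := g.toRingHom.toAlgebra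
  have hg : algebraMap (L ⊗[k] H) (L ⊗[k] B) = g.toRingHom := rfl
  have : IsScalarTower L (L ⊗[k] H) (L ⊗[k] B) := by
    refine IsScalarTower.of_algebraMap_eq' ?_
    refine RingHom.ext fun x => ?_
    exact (g.commutes x).symm
  have := IsLocalization.tensorProduct_tensorProduct_right k L U0 B (by
    ext x
    simp [hg, g])
  refine EV_of_ER (U0.map (Algebra.TensorProduct.includeRight (R := k) (A := L))) μ.toRingHom (fun b => ⟨1 ⊗ₜ b, by simp [μ]⟩) i h1 X ε ?_
  intro s x
  induction s using TensorProduct.induction_on with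
  | zero => simp
  | add s t hs ht => rw [add_smul, map_add, hs, ht, map_add, map_add, add_mul]
  | tmul l h => rw [hε, hg]; simp [g, μ]
end

open CategoryTheory
open scoped TensorProduct

section
variable {H S R : Type u} [CommRing H] [CommRing S] [CommRing R] [Algebra H R] [Algebra S R]
  [Module.Flat H R] [Module.Free S R] [SMulCommClass H S R]

lemma EV_adj_aux (θ : R →ₗ[S] S) (r : (R →ₗ[S] S) →+ H)
    (hr : ∀ h φ, r (φ ∘ₗ LinearMap.mulLeft S (algebraMap H R h)) = h * r φ) (hθ : r θ = 1)
    {X Y P : Type u} [AddCommGroup X] [Module H X] [AddCommGroup Y] [Module H Y]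
    [AddCommGroup P] [Module H P] [Module.Free H P] (a : Y →ₗ[H] P) (b : P →ₗ[H] X)
    (ha : Function.Injective a) (hb : Function.Surjective b) (hab : Function.Exact a b) :
    (EV S (R ⊗[H] X) S 0 → EV H X H 0) ∧
    (∀ i, EV S (R ⊗[H] X) S (i + 1) → EV S (R ⊗[H] Y) S i) := by
  have hF : Module.Free S (R ⊗[H] P) := Module.Free.trans (S := R)
  have hx2 : Function.Exact (a.lTensor R) (b.lTensor R) := lTensor_exact R hab hb
  have hx1 : Function.Injective (a.lTensor R) := Module.Flat.lTensor_preserves_injective_linearMap _ ha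
  have hx3 : Function.Surjective (b.lTensor R) := LinearMap.lTensor_surjective _ hb
  let a' : R ⊗[H] Y →ₗ[S] R ⊗[H] P := (a.baseChange R).restrictScalars S
  let b' : R ⊗[H] P →ₗ[S] R ⊗[H] X := (b.baseChange R).restrictScalars S
  have ha' : Function.Injective a' := hx1
  have hb' : Function.Surjective b' := hx3
  have hab' : Function.Exact a' b' := hx2
  refine ⟨?_, fun i => (EV_succ_iff a' b' ha' hb' hab' i).1⟩
  rw [EV_zero_iff a' b' ha' hb' hab', EV_zero_iff a b ha hb hab]
  intro h f
  let F : R ⊗[H] Y →ₗ[S] S :=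
    θ ∘ₗ (((TensorProduct.AlgebraTensorModule.rid H R R).toLinearMap ∘ₗ f.baseChange R).restrictScalars S)
  obtain ⟨G, hG⟩ := h F
  let φ : P → (R →ₗ[S] S) := fun x => G ∘ₗ
    { toFun := fun z => z ⊗ₜ x
      map_add' := fun z w => TensorProduct.add_tmul _ _ _
      map_smul' := fun s z => rfl }
  have hφ : ∀ x z, φ x z = G (z ⊗ₜ x) := fun x z => rfl
  refine ⟨{ toFun := fun x => r (φ x), map_add' := ?_, map_smul' := ?_ }, ?_⟩
  · intro x y
    rw [← map_add]
    congr 1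
    ext z
    simp [hφ, TensorProduct.tmul_add]
  · intro c x
    rw [RingHom.id_apply, smul_eq_mul, ← hr]
    congr 1
    ext z
    simp [hφ, TensorProduct.tmul_smul, TensorProduct.smul_tmul', Algebra.smul_def]
  · ext y
    change r (φ (a y)) = f y
    have : φ (a y) = θ ∘ₗ LinearMap.mulLeft S (algebraMap H R (f y)) := by
      ext z
      have := LinearMap.congr_fun hG (z ⊗ₜ y)
      rw [hφ]
      refine Eq.trans this ?_
      simp [F, Algebra.smul_def]
    rw [this, hr, hθ, mul_one]

lemma exists_free_cover (H X : Type u) [CommRing H] [AddCommGroup X] [Module H X] :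
    ∃ (P : Type u) (_ : AddCommGroup P) (_ : Module H P) (_ : Module.Free H P) (b : P →ₗ[H] X),
      Function.Surjective b :=
  ⟨X →₀ H, inferInstance, inferInstance, inferInstance, Finsupp.linearCombination H id,
    Finsupp.linearCombination_id_surjective H X⟩

lemma EV_adj (θ : R →ₗ[S] S) (r : (R →ₗ[S] S) →+ H)
    (hr : ∀ h φ, r (φ ∘ₗ LinearMap.mulLeft S (algebraMap H R h)) = h * r φ) (hθ : r θ = 1)
    (X : Type u) [AddCommGroup X] [Module H X] (i : ℕ) (h : EV S (R ⊗[H] X) S i) : EV H X H i := by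
  induction i generalizing X with
  | zero =>
    obtain ⟨P, _, _, _, b, hb⟩ := exists_free_cover H X
    exact (EV_adj_aux θ r hr hθ (LinearMap.ker b).subtype b (Submodule.injective_subtype _) hb
      (LinearMap.exact_subtype_ker_map b)).1 h
  | succ i ih =>
    obtain ⟨P, _, _, _, b, hb⟩ := exists_free_cover H X
    have hex : Function.Exact (LinearMap.ker b).subtype b := LinearMap.exact_subtype_ker_map b
    rw [EV_succ_iff (LinearMap.ker b).subtype b (Submodule.injective_subtype _) hb hex]
    exact ih _ ((EV_adj_aux θ r hr hθ (LinearMap.ker b).subtype b (Submodule.injective_subtype _) hb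
      hex).2 i h)
end

open CategoryTheory
open scoped TensorProduct

section
variable {k : Type u'} [Field k] {H : Type u} [CommRing H] 
variable {C : Type u} [CommRing C] [Algebra k C] {L : Type u} [Field L] [Algebra k L] [Algebra L C]
  [IsScalarTower k L C] {ι : Type} [Fintype ι] [DecidableEq ι] (bs : Module.Basis ι L C)

section plain
variable [Algebra k H]

variable (k H C L) in
noncomputable def sgH : L ⊗[k] H →ₐ[k] C ⊗[k] H :=
  Algebra.TensorProduct.map (IsScalarTower.toAlgHom k L C) (AlgHom.id k H)

lemma sgH_tmul (l : L) (h : H) : sgH k H C L (l ⊗ₜ h) = algebraMap L C l ⊗ₜ h := by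
  simp [sgH]

variable (k H) in
noncomputable def cH (a : ι) : C ⊗[k] H →ₗ[k] L ⊗[k] H :=
  ((bs.coord a).restrictScalars k).rTensor H

lemma cH_tmul (a : ι) (c : C) (h : H) : cH k H bs a (c ⊗ₜ h) = bs.coord a c ⊗ₜ h := by
  simp [cH]

lemma cH_mul (a : ι) (s : L ⊗[k] H) (x : C ⊗[k] H) :
    cH k H bs a (sgH k H C L s * x) = s * cH k H bs a x := by
  induction s using TensorProduct.induction_on with
  | zero => simp
  | add s t hs ht => simp only [map_add, add_mul, hs, ht]
  | tmul l g =>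
    induction x using TensorProduct.induction_on with
    | zero => simp
    | add s t hs ht => simp only [map_add, mul_add, hs, ht]
    | tmul c h =>
      rw [sgH_tmul, Algebra.TensorProduct.tmul_mul_tmul, cH_tmul, cH_tmul,
        Algebra.TensorProduct.tmul_mul_tmul, ← Algebra.smul_def, map_smul, smul_eq_mul]

lemma cH_sum (x : C ⊗[k] H) :
    ∑ a, sgH k H C L (cH k H bs a x) * (bs a ⊗ₜ 1) = x := by
  induction x using TensorProduct.induction_on with
  | zero => simp
  | add s t hs ht => simp only [map_add, add_mul, Finset.sum_add_distrib, hs, ht]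
  | tmul c h =>
    simp only [cH_tmul, sgH_tmul, Algebra.TensorProduct.tmul_mul_tmul, mul_one, ← Algebra.smul_def]
    rw [← TensorProduct.sum_tmul]
    congr 1
    exact bs.sum_repr c

lemma free_SR {ι : Type} [Fintype ι] [DecidableEq ι] (bs : Module.Basis ι L C) : @Module.Free (L ⊗[k] H) (C ⊗[k] H) _ _ 
    (sgH k H C L).toRingHom.toAlgebra.toModule := by
  letI : Algebra (L ⊗[k] H) (C ⊗[k] H) := (sgH k H C L).toRingHom.toAlgebra
  have hs : ∀ (s : L ⊗[k] H) (x : C ⊗[k] H), s • x = sgH k H C L s * x := fun s x => rfl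
  let e : (C ⊗[k] H) ≃ₗ[L ⊗[k] H] (ι → L ⊗[k] H) :=
    { toFun := fun x a => cH k H bs a x
      map_add' := fun x y => by ext a; simp
      map_smul' := fun s x => by ext a; simp [hs, cH_mul]
      invFun := fun v => ∑ a, sgH k H C L (v a) * (bs a ⊗ₜ 1)
      left_inv := fun x => cH_sum bs x
      right_inv := fun v => by
        ext a
        beta_reduce
        rw [map_sum]
        simp only [cH_mul, cH_tmul]
        rw [Finset.sum_eq_single a]
        · simp [← Algebra.TensorProduct.one_def]
        · intro b _ hb
          simp [Finsupp.single_apply, hb]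
        · simp }
  exact Module.Free.of_equiv e.symm

end plain

variable [HopfAlgebra k H] (π : H →ₐ[k] C) (ν : L →ₗ[k] k)

noncomputable def nH : L ⊗[k] H →ₗ[k] H := (TensorProduct.lid k H).toLinearMap ∘ₗ ν.rTensor H

lemma nH_tmul (l : L) (h : H) : nH ν (l ⊗ₜ h) = ν l • h := by simp [nH]

noncomputable def retH (φ : (C ⊗[k] H) →+ (L ⊗[k] H)) : H :=
  ∑ a, nH ν (cH k H bs a (tH π (sgH k H C L (φ (bs a ⊗ₜ 1)))))

lemma trace_id (x : C) (b : ι) (Z : C ⊗[k] H) :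
    ∑ a, nH ν (cH k H bs a ((algebraMap L C (bs.coord b (x * bs a)) ⊗ₜ 1) * Z)) =
      nH ν (cH k H bs b ((x ⊗ₜ 1) * Z)) := by
  induction Z using TensorProduct.induction_on with
  | zero => simp
  | add s t hs ht => simp only [map_add, mul_add, Finset.sum_add_distrib, hs, ht]
  | tmul z h =>
    simp only [Algebra.TensorProduct.tmul_mul_tmul, one_mul, cH_tmul, nH_tmul]
    rw [← Finset.sum_smul, ← map_sum]
    congr 2
    simp only [← Algebra.smul_def, map_smul, smul_eq_mul]
    conv_rhs => rw [← bs.sum_repr z, Finset.mul_sum, map_sum]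
    refine Finset.sum_congr rfl fun a _ => ?_
    rw [mul_smul_comm, map_smul, smul_eq_mul, mul_comm]
    rfl

lemma retH_key (φ : (C ⊗[k] H) →+ (L ⊗[k] H))
    (hφ : ∀ s x, φ (sgH k H C L s * x) = s * φ x) (X : C ⊗[k] H) :
    retH bs π ν (φ.comp (AddMonoidHom.mulLeft X)) =
      ∑ b, nH ν (cH k H bs b (tH π X * tH π (sgH k H C L (φ (bs b ⊗ₜ 1))))) := by
  rw [retH]
  simp only [AddMonoidHom.comp_apply, AddMonoidHom.coe_mulLeft]
  induction X using TensorProduct.induction_on with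
  | zero => simp
  | add s t hs ht => simp only [map_add, add_mul, Finset.sum_add_distrib, hs, ht]
  | tmul x g =>
    have h1 : ∀ a, (x ⊗ₜ[k] g) * (bs a ⊗ₜ 1) =
        ∑ b, sgH k H C L (bs.coord b (x * bs a) ⊗ₜ g) * (bs b ⊗ₜ 1) := by
      intro a
      conv_lhs => rw [← cH_sum bs ((x ⊗ₜ[k] g) * (bs a ⊗ₜ 1))]
      simp only [Algebra.TensorProduct.tmul_mul_tmul, mul_one, cH_tmul]
    simp only [h1, map_sum, hφ]
    simp only [map_mul, sgH_tmul, tH_tmul]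
    rw [Finset.sum_comm]
    refine Finset.sum_congr rfl fun b _ => ?_
    simp only [mul_assoc]
    exact trace_id bs ν x b _

lemma retH_rH (φ : (C ⊗[k] H) →+ (L ⊗[k] H))
    (hφ : ∀ s x, φ (sgH k H C L s * x) = s * φ x) (h : H) :
    retH bs π ν (φ.comp (AddMonoidHom.mulLeft (rH π h))) = h * retH bs π ν φ := by
  rw [retH_key bs π ν φ hφ, tH_rH, retH, Finset.mul_sum]
  refine Finset.sum_congr rfl fun b _ => ?_
  generalize tH π _ = Z
  induction Z using TensorProduct.induction_on with
  | zero => simp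
  | add s t hs ht => simp only [map_add, mul_add, hs, ht]
  | tmul z h => simp [cH_tmul, nH_tmul]

lemma EV_adj_hopf {ι : Type} [Fintype ι] [DecidableEq ι] (bs : Module.Basis ι L C) [Nontrivial C] (i : ℕ) 
    (hE : letI : Algebra H (C ⊗[k] H) := (rH π).toRingHom.toAlgebra
      letI : Algebra (L ⊗[k] H) (C ⊗[k] H) := (sgH k H C L).toRingHom.toAlgebra
      EV (L ⊗[k] H) ((C ⊗[k] H) ⊗[H] (H ⧸ augH k H)) (L ⊗[k] H) i) :
    EV H (H ⧸ augH k H) H i := by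
  let a1 : Algebra H (C ⊗[k] H) := (rH π).toRingHom.toAlgebra
  let a2 : Algebra (L ⊗[k] H) (C ⊗[k] H) := (sgH k H C L).toRingHom.toAlgebra
  have hs : ∀ (s : L ⊗[k] H) (x : C ⊗[k] H), s • x = sgH k H C L s * x := fun s x => rfl
  have hs2 : ∀ (s : H) (x : C ⊗[k] H), s • x = rH π s * x := fun s x => rfl
  have : Module.Flat H (C ⊗[k] H) := rH_flat π
  have : Module.Free (L ⊗[k] H) (C ⊗[k] H) := free_SR bs
  have : SMulCommClass H (L ⊗[k] H) (C ⊗[k] H) := ⟨fun a b c => by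
    rw [hs, hs2, hs, hs2]; ring⟩
  obtain ⟨ν, hν⟩ : ∃ ν : L →ₗ[k] k, ν 1 = 1 := by
    obtain ⟨ν, hν⟩ := LinearMap.exists_leftInverse_of_injective (Algebra.linearMap k L)
      (LinearMap.ker_eq_bot.2 (algebraMap k L).injective)
    exact ⟨ν, by simpa using LinearMap.congr_fun hν 1⟩
  obtain ⟨μ, hμ⟩ : ∃ μ : C →ₗ[L] L, μ 1 = 1 := by
    obtain ⟨ν, hν⟩ := LinearMap.exists_leftInverse_of_injective (Algebra.linearMap L C)
      (LinearMap.ker_eq_bot.2 (algebraMap L C).injective)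
    exact ⟨ν, by simpa using LinearMap.congr_fun hν 1⟩
  let θ : (C ⊗[k] H) →ₗ[L ⊗[k] H] (L ⊗[k] H) :=
    { toFun := (μ.restrictScalars k).rTensor H
      map_add' := fun x y => map_add _ _ _
      map_smul' := fun s x => by
        rw [hs, RingHom.id_apply, smul_eq_mul]
        induction s using TensorProduct.induction_on with
        | zero => simp
        | add s t hs ht => simp only [map_add, add_mul, hs, ht]
        | tmul l g =>
          induction x using TensorProduct.induction_on with
          | zero => simp
          | add s t hs ht => simp only [map_add, mul_add, hs, ht]
          | tmul c h =>
            rw [sgH_tmul, Algebra.TensorProduct.tmul_mul_tmul]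
            simp [← Algebra.smul_def] }
  have hθ : ∀ c h, θ (c ⊗ₜ h) = μ c ⊗ₜ h := fun c h => rfl
  let r : ((C ⊗[k] H) →ₗ[L ⊗[k] H] (L ⊗[k] H)) →+ H :=
    { toFun := fun φ => retH bs π ν φ.toAddMonoidHom
      map_zero' := by simp [retH]
      map_add' := fun x y => by simp [retH, Finset.sum_add_distrib] }
  refine EV_adj θ r ?_ ?_ _ i hE
  · intro h φ
    exact retH_rH bs π ν φ.toAddMonoidHom (fun s x => φ.map_smul s x) h
  · change ∑ a, nH ν (cH k H bs a (tH π (sgH k H C L (θ (bs a ⊗ₜ 1))))) = 1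
    simp only [hθ, sgH_tmul, tH_tmul, map_one, mul_one, cH_tmul, nH_tmul]
    rw [← Finset.sum_smul, ← map_sum]
    have : ∑ a, bs.coord a (algebraMap L C (μ (bs a))) = 1 := by
      rw [← hμ]
      conv_rhs => rw [← bs.sum_repr 1, map_sum]
      refine Finset.sum_congr rfl fun a _ => ?_
      rw [Algebra.algebraMap_eq_smul_one, map_smul, map_smul, smul_eq_mul, smul_eq_mul, mul_comm]
      rfl
    rw [this, hν, one_smul]

end

open CategoryTheory
open scoped TensorProduct

section
variable {k : Type u'} [Field k] {H : Type u} [CommRing H] [HopfAlgebra k H]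
variable {C : Type u} [CommRing C] [Algebra k C] {L : Type u} [Field L] [Algebra k L] [Algebra L C]
  [IsScalarTower k L C]

lemma adj_package [Nontrivial C] [Module.Finite L C] (π : H →ₐ[k] C) :
    ∃ (X : Type u) (_ : AddCommGroup X) (_ : Module (L ⊗[k] H) X) (ε : X ≃+ C),
      (∀ l h x, ε ((l ⊗ₜ h : L ⊗[k] H) • x) = algebraMap L C l * π h * ε x) ∧
      Module.Finite (L ⊗[k] H) X ∧
      ∀ i, EV (L ⊗[k] H) X (L ⊗[k] H) i → EV H (H ⧸ augH k H) H i := by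
  let bs := Module.finBasis L C
  let a1 : Algebra H (C ⊗[k] H) := (rH π).toRingHom.toAlgebra
  let a2 : Algebra (L ⊗[k] H) (C ⊗[k] H) := (sgH k H C L).toRingHom.toAlgebra
  let e1 : ((C ⊗[k] H) ⊗[H] (H ⧸ augH k H)) ≃ₗ[C ⊗[k] H]
      ((C ⊗[k] H) ⧸ (augH k H).map (algebraMap H (C ⊗[k] H))) :=
    (Algebra.TensorProduct.quotIdealMapEquivTensorQuot (C ⊗[k] H) (augH k H)).symm.toLinearEquiv
  let e2 : ((C ⊗[k] H) ⧸ (augH k H).map (algebraMap H (C ⊗[k] H))) ≃+*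
      ((C ⊗[k] H) ⧸ RingHom.ker (nuH π).toRingHom) := Ideal.quotEquivOfEq (nuH_ker π).symm
  let e3 : ((C ⊗[k] H) ⧸ RingHom.ker (nuH π).toRingHom) ≃+* C :=
    RingHom.quotientKerEquivOfSurjective (nuH_surj π)
  let ε : ((C ⊗[k] H) ⊗[H] (H ⧸ augH k H)) ≃+ C :=
    e1.toAddEquiv.trans (e2.toAddEquiv.trans e3.toAddEquiv)
  have hε : ∀ (l : L) (h : H) (x : (C ⊗[k] H) ⊗[H] (H ⧸ augH k H)),
      ε ((l ⊗ₜ h : L ⊗[k] H) • x) = algebraMap L C l * π h * ε x := by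
    intro l h x
    have h1 : (l ⊗ₜ h : L ⊗[k] H) • x = (algebraMap L C l ⊗ₜ h : C ⊗[k] H) • x := by
      have := algebraMap_smul (C ⊗[k] H) (l ⊗ₜ h : L ⊗[k] H) x
      rw [← this]
      rfl
    rw [h1]
    change e3 (e2 (e1 _)) = _ * e3 (e2 (e1 x))
    rw [map_smul]
    obtain ⟨y, hy⟩ := Ideal.Quotient.mk_surjective (e1 x)
    rw [← hy]
    change nuH π ((algebraMap L C l ⊗ₜ h : C ⊗[k] H) * y) = _ * nuH π y
    rw [map_mul, nuH_tmul]
  refine ⟨(C ⊗[k] H) ⊗[H] (H ⧸ augH k H), inferInstance, inferInstance, ε, hε, ?_, ?_⟩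
  · refine Module.Finite.of_fg_top ?_ 
    refine Submodule.fg_def.2 ⟨Set.range (fun a => ε.symm (bs a)), Set.finite_range _, ?_⟩
    rw [eq_top_iff]
    intro x _
    have : x = ∑ a, (bs.repr (ε x) a ⊗ₜ 1 : L ⊗[k] H) • ε.symm (bs a) := by
      apply ε.injective
      rw [map_sum]
      simp only [hε, map_one, mul_one, AddEquiv.apply_symm_apply, ← Algebra.smul_def]
      exact (bs.sum_repr _).symm
    rw [this]
    exact Submodule.sum_mem _ fun a _ => Submodule.smul_mem _ _ (Submodule.subset_span ⟨a, rfl⟩)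
  · intro i h
    exact EV_adj_hopf π bs i h
end

section
variable {k : Type u'} [Field k] {H : Type u} [CommRing H] [HopfAlgebra k H] [IsNoetherianRing H]

lemma EV_aug {B : Type u} [CommRing B] [Nontrivial B] [Algebra k B] [IsNoetherianRing B] (n : ℕ)
    (A0 : Type u) [CommRing A0] [Algebra k A0] (e : MvPolynomial (Fin n) k ≃ₐ[k] A0)
    (L : Type u) [Field L] [Algebra k L] [Algebra A0 L] [IsScalarTower k A0 L] (M : Submonoid A0)
    [IsLocalization M L] [Algebra L B] [IsScalarTower k L B] [Module.Finite L B]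
    [Algebra.EssFiniteType k L]
    [Algebra H B] [IsScalarTower k H B] (U0 : Submonoid H) [IsLocalization U0 B]
    (i : ℕ) (hi : n ≤ i) : EV H (H ⧸ augH k H) H i := by
  have : IsNoetherianRing (L ⊗[k] H) := tensor_noeth L
  obtain ⟨X, _, _, ε, hε, _, hX⟩ := adj_package (L := L) (IsScalarTower.toAlgHom k H B)
  exact hX i (EV_SB n A0 e L M (IsScalarTower.toAlgHom k L B) U0 X ε hε i hi)
end

lemma finite_of_finiteLength {L B M : Type u} [Field L] [CommRing B] [IsLocalRing B] [Algebra L B]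
    [AddCommGroup M] [Module B M] (hM : IsFiniteLength B M)
    (hK : Module.Finite L (IsLocalRing.ResidueField B)) :
    ∀ [Module L M] [IsScalarTower L B M], Module.Finite L M := by
  induction hM with
  | of_subsingleton => intro _ _; infer_instance
  | @of_simple_quotient M _ _ N hs hN ih =>
    intro _ _
    have h1 : Module.Finite L N := ih
    have h2 : Module.Finite L (M ⧸ N) := by
      obtain ⟨m, hm, ⟨e⟩⟩ := isSimpleModule_iff_quot_maximal.1 hs
      obtain rfl := IsLocalRing.eq_maximalIdeal hm
      have : Module.Finite L (B ⧸ IsLocalRing.maximalIdeal B) := hK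
      exact Module.Finite.equiv (e.symm.restrictScalars L)
    have h1' : Module.Finite L (N.restrictScalars L) := h1
    have h2' : Module.Finite L (M ⧸ N.restrictScalars L) := h2
    exact Module.Finite.of_submodule_quotient (N.restrictScalars L)

open CategoryTheory
open scoped TensorProduct
open scoped IntermediateField.algebraAdjoinAdjoin

section
variable {k : Type u'} [Field k] {H : Type u} [CommRing H] [HopfAlgebra k H] [IsNoetherianRing H]

lemma exists_lift_field {B : Type u} [CommRing B] [IsLocalRing B] [Algebra k B] (n : ℕ)
    (x : Fin n → IsLocalRing.ResidueField B) (hx : AlgebraicIndependent k x) :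
    ∃ j : IntermediateField.adjoin k (Set.range x) →ₐ[k] B,
      ∀ l, IsLocalRing.residue B (j l) = l := by
  choose y hy using fun a => IsLocalRing.residue_surjective (x a)
  let g : Algebra.adjoin k (Set.range x) →ₐ[k] B :=
    (MvPolynomial.aeval y).comp hx.aevalEquiv.symm.toAlgHom
  let q : B →ₐ[k] IsLocalRing.ResidueField B := IsScalarTower.toAlgHom k B _
  have hq : ∀ b, q b = IsLocalRing.residue B b := fun b => rfl
  have hg : ∀ a, q (g a) = a := by
    intro a
    obtain ⟨p, rfl⟩ := hx.aevalEquiv.surjective a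
    have h1 : g (hx.aevalEquiv p) = MvPolynomial.aeval y p := by
      simp [g]
    rw [h1, ← AlgHom.comp_apply, MvPolynomial.comp_aeval]
    have : (fun i => q (y i)) = x := funext hy
    rw [this]
    rfl
  have hu : ∀ a : nonZeroDivisors (Algebra.adjoin k (Set.range x)), IsUnit (g a) := by
    intro a
    by_contra h
    have h1 : q (g a) = 0 := (IsLocalRing.residue_eq_zero_iff _).2 h
    rw [hg] at h1
    exact nonZeroDivisors.coe_ne_zero a (Subtype.ext h1)
  let j : IntermediateField.adjoin k (Set.range x) →ₐ[k] B :=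
    IsLocalization.liftAlgHom (M := nonZeroDivisors (Algebra.adjoin k (Set.range x))) hu
  refine ⟨j, fun l => ?_⟩
  have : q.toRingHom.comp j.toRingHom = (IntermediateField.adjoin k (Set.range x)).val.toRingHom := by
    refine IsLocalization.ringHom_ext (nonZeroDivisors (Algebra.adjoin k (Set.range x))) ?_
    ext a
    have h1 : j (algebraMap _ _ a) = g a := IsLocalization.lift_eq hu a
    change q (j (algebraMap _ _ a)) = a
    rw [h1, hg]
  exact RingHom.congr_fun this l

lemma finite_of_lift {L B : Type u} [Field L] [CommRing B] [IsLocalRing B] [IsArtinianRing B]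
    [inst : Algebra L (IsLocalRing.ResidueField B)] (j : L →+* B)
    (hj : ∀ l, IsLocalRing.residue B (j l) = algebraMap L _ l)
    (hfin : Module.Finite L (IsLocalRing.ResidueField B)) :
    @Module.Finite L B _ _ j.toAlgebra.toModule := by
  let a := j.toAlgebra
  have h : inst = (IsLocalRing.ResidueField.algebra B : Algebra L (IsLocalRing.ResidueField B)) :=
    Algebra.algebra_ext _ _ fun l => (hj l).symm
  subst h
  exact finite_of_finiteLength (B := B)
    (isFiniteLength_iff_isNoetherian_isArtinian.2 ⟨inferInstance, inferInstance⟩) hfin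

lemma exists_bound_aux {B : Type u} [CommRing B] [IsLocalRing B] [IsArtinianRing B] [Algebra k B]
    [Algebra H B] [IsScalarTower k H B] (U0 : Submonoid H) [IsLocalization U0 B] :
    ∃ n : ℕ, ∀ i, n ≤ i → EV H (H ⧸ augH k H) H i := by
  have hE : Algebra.EssFiniteType k (IsLocalRing.ResidueField B) := by
    refine essFinite_of_gen ((IsScalarTower.toAlgHom k B _).comp (IsScalarTower.toAlgHom k H B)) ?_
    intro L' hL
    rw [eq_top_iff]
    intro z _
    obtain ⟨b, rfl⟩ := IsLocalRing.residue_surjective z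
    obtain ⟨⟨h, u⟩, hu⟩ := IsLocalization.surj U0 b
    have h1 : IsLocalRing.residue B b * IsLocalRing.residue B (algebraMap H B u) =
      IsLocalRing.residue B (algebraMap H B h) := by rw [← map_mul, hu]
    have h2 : IsLocalRing.residue B (algebraMap H B u) ≠ 0 :=
      ((IsLocalization.map_units B u).map _).ne_zero
    rw [eq_div_of_mul_eq h2 h1]
    exact L'.div_mem (hL h) (hL u)
  obtain ⟨s, hs⟩ := exists_finset_isTranscendenceBasis k (IsLocalRing.ResidueField B)
  obtain ⟨n, x, hx⟩ : ∃ (n : ℕ) (x : Fin n → IsLocalRing.ResidueField B),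
      IsTranscendenceBasis k x :=
    ⟨s.card, _, (isTranscendenceBasis_equiv s.equivFin.symm).2 hs⟩
  obtain ⟨j, hj⟩ := exists_lift_field n x hx.1
  refine ⟨n, fun i hi => ?_⟩
  have halg := hx.isAlgebraic_field
  have hLf : Algebra.EssFiniteType k (IntermediateField.adjoin k (Set.range x)) := by
    rw [IntermediateField.essFiniteType_iff]
    exact IntermediateField.fg_adjoin_of_finite (Set.finite_range x)
  have hE2 : Algebra.EssFiniteType (IntermediateField.adjoin k (Set.range x))
    (IsLocalRing.ResidueField B) := .of_comp k _ _
  have hfin : Module.Finite (IntermediateField.adjoin k (Set.range x))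
    (IsLocalRing.ResidueField B) := Algebra.finite_of_essFiniteType_of_isAlgebraic
  let _ : Algebra (IntermediateField.adjoin k (Set.range x)) B := j.toRingHom.toAlgebra
  have : IsScalarTower k (IntermediateField.adjoin k (Set.range x)) B :=
    IsScalarTower.of_algebraMap_eq' j.comp_algebraMap.symm
  have hBfin : Module.Finite (IntermediateField.adjoin k (Set.range x)) B :=
    finite_of_lift j.toRingHom hj hfin
  exact EV_aug n (Algebra.adjoin k (Set.range x)) hx.1.aevalEquiv
    (IntermediateField.adjoin k (Set.range x)) (nonZeroDivisors _) (B := B) U0 i hi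

lemma exists_bound : ∃ n : ℕ, ∀ i, n ≤ i → EV H (H ⧸ augH k H) H i := by
  have : Nontrivial H := (Bialgebra.counitAlgHom k H).toRingHom.domain_nontrivial
  obtain ⟨⟨p, hp⟩⟩ := Ideal.nonempty_minimalPrimes (bot_ne_top (α := Ideal H))
  have : p.IsPrime := hp.1.1
  have : Ring.KrullDimLE 0 (Localization.AtPrime p) := .of_isLocalization _ hp _
  have : IsNoetherianRing (Localization.AtPrime p) :=
    IsLocalization.isNoetherianRing p.primeCompl _ inferInstance
  have : IsArtinianRing (Localization.AtPrime p) := isArtinianRing_iff_krullDimLE_zero.2 inferInstance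
  exact exists_bound_aux (B := Localization.AtPrime p) p.primeCompl
end

theorem commutative_noetherian_hopf_algebra_gorenstein
    (k : Type u') [Field k] (H : Type u) [CommRing H] [HopfAlgebra k H]
    [IsNoetherianRing H] :
    selfInjectiveDimension H ≠ ⊤ := by
  obtain ⟨d, hd⟩ := exists_bound (k := k) (H := H)
  have h1 := partII d hd
  have h2 : HasInjectiveDimensionLE (ModuleCat.of H (ULift.{u} H)) d :=
    (ModuleCat.hasInjectiveDimensionLE_iff_of_linearEquiv ULift.moduleEquiv.symm d).1 h1
  refine ne_top_of_le_ne_top (ENat.coe_ne_top d) (sInf_le ⟨d, rfl, ?_⟩)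
  intro M _ _ i hi
  exact HasInjectiveDimensionLT.subsingleton _ (d + 1) i hi _
end

section
/- Let k be a field and let 𝔤 be a finite-dimensional Lie algebra over k. The universal enveloping algebra U(𝔤) satisfies a polynomial identity if and only if 𝔤 is abelian or k has positive characteristic. -/
/-!
STATEMENT 10 (Latyšev, Bahturin):
The universal enveloping algebra `U(𝔤)` of a finite-dimensional Lie algebra `𝔤`
over a field `k` satisfies a polynomial identity if and only if `𝔤` is abelian or
`k` has positive characteristic.
-/

universe u v

/-- An algebra `A` over `k` satisfies a polynomial identity if there is a nonzero
polynomial `f` in finitely many noncommuting variables, with coefficients in `k`,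
which vanishes identically on `A`. -/
def SatisfiesPolynomialIdentity (k : Type u) (A : Type v) [CommSemiring k] [Ring A]
    [Algebra k A] : Prop :=
  ∃ (n : ℕ) (f : FreeAlgebra k (Fin n)), f ≠ 0 ∧
    ∀ v : Fin n → A, FreeAlgebra.lift k v f = 0


def MLPI (k : Type*) (A : Type*) [CommSemiring k] [Ring A] [Algebra k A] : Prop :=
  ∃ (d : ℕ) (c : Equiv.Perm (Fin d) → k), c 1 ≠ 0 ∧
    ∀ a : Fin d → A, ∑ σ, c σ • (List.ofFn (fun i => a (σ i))).prod = 0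

theorem altsum_superset {d : ℕ} (T : Finset (Fin d)) (hT : T ≠ Finset.univ) :
    ∑ S : Finset (Fin d), (if T ⊆ S then (-1 : ℤ) ^ S.card else 0) = 0 := by
  obtain ⟨j, hj⟩ : ∃ j, j ∉ T := by
    by_contra h; push Not at h; exact hT (Finset.eq_univ_iff_forall.2 h)
  refine Finset.sum_involution (fun S _ => if j ∈ S then S.erase j else insert j S) ?_ ?_ ?_ ?_
  · intro S _
    by_cases hS : j ∈ S
    · have h1 : T ⊆ S.erase j ↔ T ⊆ S :=
        ⟨fun h => h.trans (Finset.erase_subset _ _), fun h => Finset.subset_erase.2 ⟨h, hj⟩⟩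
      simp only [hS, if_true, h1]
      split_ifs
      · have := Finset.card_erase_add_one hS
        rw [← this, pow_succ]; ring
      · simp
    · have h1 : T ⊆ insert j S ↔ T ⊆ S := by
        rw [Finset.subset_insert_iff_of_notMem hj]
      simp only [hS, if_false, h1]
      split_ifs
      · rw [Finset.card_insert_of_notMem hS, pow_succ]; ring
      · simp
  · intro S _ _ h
    by_cases hS : j ∈ S
    · simp only [hS, if_true] at h
      have : j ∉ S.erase j := Finset.notMem_erase _ _
      rw [h] at this; exact this hS
    · simp only [hS, if_false] at h
      have : j ∈ insert j S := Finset.mem_insert_self _ _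
      rw [h] at this; exact hS this
  · intros; exact Finset.mem_univ _
  · intro S _
    by_cases hS : j ∈ S
    · simp [hS]
    · simp [hS]

theorem prod_expand {A : Type*} [Ring A] {d m : ℕ} (g : Fin m → Fin d → A) (S : Finset (Fin d)) :
    (List.ofFn (fun l => ∑ j ∈ S, g l j)).prod =
      ∑ φ : Fin m → Fin d, if Finset.univ.image φ ⊆ S then (List.ofFn fun l => g l (φ l)).prod else 0 := by
  have := (MultilinearMap.mkPiAlgebraFin ℤ m A).map_sum_finset g (fun _ => S)
  simp only [MultilinearMap.mkPiAlgebraFin_apply] at this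
  rw [this, ← Finset.sum_filter]
  refine Finset.sum_congr ?_ fun _ _ => rfl
  ext φ
  simp [Fintype.mem_piFinset, Finset.subset_iff]

theorem word_polar {A : Type*} [Ring A] {d n : ℕ} (w : Fin d → Fin n) (a : Fin d → A)
    (u : List (Fin n)) (hu : u.length ≤ d) :
    ∑ S : Finset (Fin d), (-1 : ℤ) ^ S.card •
      (u.map (fun i => ∑ j ∈ S, if w j = i then a j else 0)).prod =
    (-1 : ℤ) ^ d • ∑ σ : Equiv.Perm (Fin d),
      if u = List.ofFn (fun i => w (σ i)) then (List.ofFn (fun i => a (σ i))).prod else 0 := by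
  obtain ⟨m, u, rfl⟩ : ∃ m, ∃ u' : Fin m → Fin n, u = List.ofFn u' := ⟨_, u.get, (List.ofFn_get u).symm⟩
  rw [List.length_ofFn] at hu
  have e1 : ∀ S : Finset (Fin d), ((List.ofFn u).map (fun i => ∑ j ∈ S, if w j = i then a j else 0)).prod
      = ∑ φ : Fin m → Fin d, if Finset.univ.image φ ⊆ S then
        (List.ofFn fun l => if w (φ l) = u l then a (φ l) else 0).prod else 0 := by
    intro S
    rw [List.map_ofFn]
    exact prod_expand (fun l j => if w j = u l then a j else 0) S
  simp_rw [e1, Finset.smul_sum]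
  rw [Finset.sum_comm]
  have e2 : ∀ φ : Fin m → Fin d, ∑ S : Finset (Fin d), (-1 : ℤ) ^ S.card •
      (if Finset.univ.image φ ⊆ S then
        (List.ofFn fun l => if w (φ l) = u l then a (φ l) else 0).prod else 0) =
      if Finset.univ.image φ = Finset.univ then
        (-1 : ℤ) ^ d • (List.ofFn fun l => if w (φ l) = u l then a (φ l) else 0).prod else 0 := by
    intro φ
    have : ∀ S : Finset (Fin d), (-1 : ℤ) ^ S.card •
      (if Finset.univ.image φ ⊆ S then
        (List.ofFn fun l => if w (φ l) = u l then a (φ l) else 0).prod else 0) =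
        (if Finset.univ.image φ ⊆ S then (-1 : ℤ) ^ S.card else 0) •
        (List.ofFn fun l => if w (φ l) = u l then a (φ l) else 0).prod := by
      intro S; split_ifs <;> simp
    simp_rw [this, ← Finset.sum_smul]
    split_ifs with h
    · rw [h]
      simp [Finset.univ_subset_iff]
    · rw [altsum_superset _ h, zero_smul]
  simp_rw [e2]
  rcases hu.lt_or_eq with hlt | rfl
  · rw [Finset.sum_eq_zero, Finset.sum_eq_zero]
    · intro σ _
      rw [if_neg, smul_zero]
      intro h
      have := congrArg List.length h
      simp at this; omega
    · intro φ _
      rw [if_neg]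
      intro h
      have := Finset.card_image_le (s := Finset.univ) (f := φ)
      rw [h] at this; simp at this; omega
  · rw [← Finset.sum_filter]
    symm
    refine Finset.sum_bij (fun σ _ => (σ : Fin m → Fin m)) ?_ ?_ ?_ ?_
    · intro σ _
      simp [Finset.image_univ_equiv]
    · intro σ _ τ _ h
      exact DFunLike.coe_injective h
    · intro φ hφ
      have hs : Function.Surjective φ := by
        intro y
        have := (Finset.mem_filter.1 hφ).2 ▸ Finset.mem_univ y
        simpa using this
      exact ⟨Equiv.ofBijective φ (Finite.injective_iff_surjective.2 hs |> fun h => ⟨h, hs⟩),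
        Finset.mem_univ _, rfl⟩
    · intro σ _
      congr 1
      by_cases h : ∀ l, w (σ l) = u l
      · rw [if_pos]
        · simp [h]
        · congr 1; ext l; rw [h]
      · rw [if_neg]
        · push Not at h
          obtain ⟨l, hl⟩ := h
          symm
          apply List.prod_eq_zero
          rw [List.mem_ofFn]
          exact ⟨l, by simp [hl]⟩
        · intro h'
          exact h fun l => (congrFun (List.ofFn_injective h') l).symm

theorem lift_eq_sum {k A : Type*} [Field k] [Ring A] [Algebra k A] {n : ℕ}
    (f : FreeAlgebra k (Fin n)) (v : Fin n → A) :
    FreeAlgebra.lift k v f =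
      Finsupp.sum (FreeAlgebra.equivMonoidAlgebraFreeMonoid f).coeff
        (fun u r => r • ((FreeMonoid.toList u).map v).prod) := by
  have : FreeAlgebra.lift k v = (MonoidAlgebra.lift k A (FreeMonoid (Fin n)) (FreeMonoid.lift v)).comp
      (FreeAlgebra.equivMonoidAlgebraFreeMonoid (R := k) (X := Fin n)).toAlgHom := by
    ext i
    simp [FreeAlgebra.equivMonoidAlgebraFreeMonoid]
  rw [this]
  simp [MonoidAlgebra.lift_apply, FreeMonoid.lift_apply]

theorem mlpi_of_pi {k A : Type*} [Field k] [Ring A] [Algebra k A]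
    (h : SatisfiesPolynomialIdentity k A) : MLPI k A := by
  obtain ⟨n, f, hf, hv⟩ := h
  simp_rw [lift_eq_sum] at hv
  have hF : (FreeAlgebra.equivMonoidAlgebraFreeMonoid f).coeff ≠ 0 := by
    simpa using hf
  generalize (FreeAlgebra.equivMonoidAlgebraFreeMonoid f).coeff = F at hv hF
  change (FreeMonoid (Fin n) →₀ k) at F
  obtain ⟨w, hw, hmax⟩ := Finset.exists_max_image F.support (fun u => (FreeMonoid.toList u).length)
    (Finsupp.support_nonempty_iff.2 hF)
  refine ⟨(FreeMonoid.toList w).length, fun σ => F (FreeMonoid.ofList (List.ofFn fun i =>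
    (FreeMonoid.toList w).get (σ i))), ?_, ?_⟩
  · simpa using hw
  · intro a
    have h0 : ∑ S : Finset (Fin (FreeMonoid.toList w).length), (-1 : ℤ) ^ S.card •
        F.sum (fun u r => r • ((FreeMonoid.toList u).map (fun i => ∑ j ∈ S,
          if (FreeMonoid.toList w).get j = i then a j else 0)).prod) = 0 := by
      simp_rw [hv]; simp
    simp_rw [Finsupp.sum, Finset.smul_sum] at h0
    rw [Finset.sum_comm] at h0
    simp_rw [smul_comm _ (F _), ← Finset.smul_sum] at h0
    rw [Finset.sum_congr rfl (fun u hu => by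
      rw [word_polar (FreeMonoid.toList w).get a (FreeMonoid.toList u) (hmax u hu)])] at h0
    simp_rw [smul_comm (F _), ← Finset.smul_sum] at h0
    have h1 : ∀ x : A, (-1 : ℤ) ^ (FreeMonoid.toList w).length • x = 0 → x = 0 := by
      intro x hx
      rcases neg_one_pow_eq_or ℤ (FreeMonoid.toList w).length with h | h <;> simpa [h] using hx
    have h2 := h1 _ h0
    simp_rw [Finset.smul_sum] at h2
    rw [Finset.sum_comm] at h2
    rw [← h2]
    refine Finset.sum_congr rfl fun σ _ => ?_
    rw [Finset.sum_eq_single (FreeMonoid.ofList (List.ofFn fun i => (FreeMonoid.toList w).get (σ i)))]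
    · simp
    · intro u _ hu
      rw [if_neg, smul_zero]
      intro h; apply hu; rw [← h]; simp
    · intro h
      rw [Finsupp.notMem_support_iff.1 h, zero_smul]

theorem weight_contra {k A M : Type*} [Field k] [CharZero k] [Ring A] [Algebra k A]
    [AddCommGroup M] [Module k M] (act : A →ₐ[k] Module.End k M)
    (hA : MLPI k A) (h y z : A) (hy : h * y = y * h + z * y) (hz : h * z = z * h)
    (yz : y * z = z * y)
    (hv : ∀ d : ℕ, ∃ v : M, act h v = 0 ∧ ∀ N, act (z ^ N * y ^ d) v ≠ 0) : False := by
  obtain ⟨d, c, hc, hid⟩ := hA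
  obtain ⟨v, hv0, hvN⟩ := hv d
  -- weight relation
  have hzN : ∀ N, h * z ^ N = z ^ N * h := fun N => (Commute.pow_right (show Commute h z from hz) N)
  have yzN : ∀ N, y * z ^ N = z ^ N * y := fun N => (Commute.pow_right (show Commute y z from yz) N)
  have zyN : ∀ m, y ^ m * z = z * y ^ m := fun N => (Commute.pow_left (show Commute y z from yz) N)
  have hym : ∀ m : ℕ, h * y ^ m = y ^ m * h + (m : A) * (z * y ^ m) := by
    intro m
    induction m with
    | zero => simp
    | succ m ih =>
      rw [pow_succ, ← mul_assoc, ih, add_mul, mul_assoc, hy, mul_add, ← mul_assoc (y ^ m) z y, zyN]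
      push_cast
      noncomm_ring
  let C : ℕ → ℕ → k := fun j m =>
    (((List.range d).filter (fun m' => m' ≠ j)).map (fun m' : ℕ => (m : k) - (m' : k))).prod
  let q : ℕ → A := fun j =>
    (((List.range d).filter (fun m' => m' ≠ j)).map (fun m' : ℕ => h - (m' : A) * z)).prod
  have hw : ∀ N m : ℕ, act h (act (z ^ N * y ^ m) v) = (m : k) • act (z ^ (N + 1) * y ^ m) v := by
    intro N m
    have : h * (z ^ N * y ^ m) = z ^ N * y ^ m * h + (m : k) • (z ^ (N + 1) * y ^ m) := by
      rw [← mul_assoc, hzN, mul_assoc, hym, mul_add, mul_assoc, pow_succ, Nat.cast_smul_eq_nsmul,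
        nsmul_eq_mul, ← mul_assoc, ← mul_assoc, ← (Nat.cast_commute m (z ^ N)).eq]
      noncomm_ring
    rw [← Module.End.mul_apply, ← map_mul, this, map_add, map_mul, LinearMap.add_apply,
      Module.End.mul_apply, hv0, map_zero, zero_add, map_smul, LinearMap.smul_apply]
  have hfac : ∀ m' N m : ℕ, act (h - (m' : A) * z) (act (z ^ N * y ^ m) v) =
      ((m : k) - (m' : k)) • act (z ^ (N + 1) * y ^ m) v := by
    intro m' N m
    rw [map_sub, LinearMap.sub_apply, hw, sub_smul]
    congr 1
    rw [← Module.End.mul_apply, ← map_mul, ← LinearMap.smul_apply, ← map_smul]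
    congr 2
    rw [Nat.cast_smul_eq_nsmul, nsmul_eq_mul, pow_succ', mul_assoc, mul_assoc]
  have hlist : ∀ (l : List ℕ) (N m : ℕ),
      act ((l.map (fun m' : ℕ => h - (m' : A) * z)).prod) (act (z ^ N * y ^ m) v) =
      ((l.map (fun m' : ℕ => (m : k) - (m' : k))).prod) • act (z ^ (N + l.length) * y ^ m) v := by
    intro l
    induction l with
    | nil => intro N m; simp
    | cons x l ih =>
      intro N m
      simp only [List.map_cons, List.prod_cons, List.length_cons]
      rw [map_mul, Module.End.mul_apply, ih, map_smul, hfac, smul_smul, mul_comm, add_assoc]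
  have ha : ∀ j m N : ℕ, ∃ N', act (y * q j) (act (z ^ N * y ^ m) v) =
      C j m • act (z ^ N' * y ^ (m + 1)) v := by
    intro j m N
    refine ⟨N + ((List.range d).filter (fun m' => m' ≠ j)).length, ?_⟩
    rw [map_mul, Module.End.mul_apply, hlist, map_smul]
    congr 1
    rw [← Module.End.mul_apply, ← map_mul, ← mul_assoc, yzN, mul_assoc, ← pow_succ']
  have hprod : ∀ (r : ℕ) (τ : Fin r → ℕ), ∃ N, act ((List.ofFn fun i => y * q (τ i)).prod) v =
      (∏ i, C (τ i) (r - 1 - i)) • act (z ^ N * y ^ r) v := by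
    intro r
    induction r with
    | zero => intro τ; exact ⟨0, by simp⟩
    | succ r ih =>
      intro τ
      obtain ⟨N, hN⟩ := ih (fun i => τ i.succ)
      obtain ⟨N', hN'⟩ := ha (τ 0) r N
      refine ⟨N', ?_⟩
      rw [List.ofFn_succ, List.prod_cons, map_mul, Module.End.mul_apply, hN, map_smul, hN',
        smul_smul, Fin.prod_univ_succ, mul_comm]
      congr 2
      refine Finset.prod_congr rfl fun i _ => ?_
      congr 1
      simp only [Fin.val_succ]; omega
  have hC0 : ∀ j m : ℕ, m < d → m ≠ j → C j m = 0 := by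
    intro j m hm hj
    apply List.prod_eq_zero
    rw [List.mem_map]
    exact ⟨m, by simp [hm, hj], sub_self _⟩
  have hC1 : ∀ m : ℕ, C m m ≠ 0 := by
    intro m h0
    have := List.prod_eq_zero_iff.1 h0
    rw [List.mem_map] at this
    obtain ⟨m', h1, h2⟩ := this
    rw [sub_eq_zero, Nat.cast_inj] at h2
    simp [h2] at h1
  have hid' := congrArg (fun t => act t v) (hid (fun i => y * q (d - 1 - i)))
  simp only [map_sum, map_smul, LinearMap.sum_apply, LinearMap.smul_apply, map_zero,
    LinearMap.zero_apply] at hid'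
  rw [Finset.sum_eq_single 1] at hid'
  · obtain ⟨N, hN⟩ := hprod d (fun i => d - 1 - i)
    simp only [Equiv.Perm.one_apply] at hid'
    rw [hN, smul_eq_zero, smul_eq_zero] at hid'
    rcases hid' with h1 | h1 | h1
    · exact hc h1
    · rw [Finset.prod_eq_zero_iff] at h1
      obtain ⟨i, _, h1⟩ := h1
      exact hC1 _ h1
    · exact hvN _ h1
  · intro σ _ hσ
    obtain ⟨N, hN⟩ := hprod d (fun i => d - 1 - (σ i))
    rw [hN]
    obtain ⟨i, hi⟩ : ∃ i, σ i ≠ i := by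
      by_contra hcon; push Not at hcon; exact hσ (Equiv.ext hcon)
    rw [Finset.prod_eq_zero (Finset.mem_univ i), zero_smul, smul_zero]
    apply hC0
    · have := i.2; omega
    · intro h1; apply hi; ext; have := i.2; have := (σ i).2; omega
  · intro h1; exact absurd (Finset.mem_univ _) h1

section Aux
attribute [local instance] LieRing.ofAssociativeRing

open UniversalEnvelopingAlgebra in
theorem uea_top {k g : Type*} [CommRing k] [LieRing g] [LieAlgebra k g]
    (S : Subalgebra k (UniversalEnvelopingAlgebra k g)) (hS : ∀ x, ι k x ∈ S) : S = ⊤ := by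
  let f : g →ₗ⁅k⁆ S :=
    { toFun := fun x => ⟨ι k x, hS x⟩
      map_add' := fun x y => by ext; simp
      map_smul' := fun r x => by ext; simp
      map_lie' := fun {x y} => by
        ext; simp [LieRing.of_associative_ring_bracket] }
  have : S.val.comp (lift k f) = AlgHom.id k _ := by
    apply UniversalEnvelopingAlgebra.hom_ext
    ext x
    simp only [LieHom.comp_apply, AlgHom.coe_toLieHom, AlgHom.comp_apply, lift_ι_apply]
    rfl
  rw [eq_top_iff]
  intro u _
  have h := DFunLike.congr_fun this u
  rw [AlgHom.id_apply] at h
  rw [← h]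
  exact (lift k f u).2

theorem mlpi_transfer {k K A B : Type*} [Field k] [Field K] [Algebra k K] [Ring A] [Ring B]
    [Algebra k A] [Algebra k B] [Algebra K B] [IsScalarTower k K B] (φ : A →ₐ[k] B)
    (hφ : Submodule.span K (Set.range φ) = ⊤) (h : MLPI k A) : MLPI K B := by
  obtain ⟨d, c, hc, hid⟩ := h
  refine ⟨d, fun σ => algebraMap k K (c σ), by simpa using hc, ?_⟩
  let F : MultilinearMap K (fun _ : Fin d => B) B :=
    ∑ σ, algebraMap k K (c σ) • (MultilinearMap.mkPiAlgebraFin K d B).domDomCongr σ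
  have hF : ∀ a : Fin d → B, F a = ∑ σ, algebraMap k K (c σ) • (List.ofFn (fun i => a (σ i))).prod := by
    intro a
    simp [F]
  have h0 : ∀ a : Fin d → A, F (fun i => φ (a i)) = 0 := by
    intro a
    rw [hF]
    have := congrArg φ (hid a)
    simp only [map_sum, map_smul, map_zero, map_list_prod, List.map_ofFn] at this
    rw [← this]
    refine Finset.sum_congr rfl fun σ _ => ?_
    rw [algebraMap_smul]; rfl
  intro a
  rw [← hF]
  have : ∀ i, ∃ (l : B →₀ K), (∀ b ∈ l.support, b ∈ Set.range φ) ∧ a i = ∑ b ∈ l.support, l b • b := by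
    intro i
    have hi : a i ∈ Submodule.span K (Set.range φ) := by rw [hφ]; trivial
    rw [Submodule.mem_span_iff_exists_finset_subset] at hi
    obtain ⟨f, t, ht, hsupp, hsum⟩ := hi
    refine ⟨Finsupp.onFinset t f (fun b hb => hsupp hb), ?_, ?_⟩
    · intro b hb
      exact ht (hsupp (by simpa using hb))
    · rw [← hsum]
      symm
      apply Finset.sum_subset
      · intro b hb; exact hsupp (by simpa using hb)
      · intro b _ hb; simp at hb; simp [hb]
  choose l hl hal using this
  have ea : a = fun i => ∑ b ∈ (l i).support, (l i) b • b := funext hal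
  rw [ea, F.map_sum_finset]
  refine Finset.sum_eq_zero fun r hr => ?_
  rw [F.map_smul_univ]
  have : ∀ i, ∃ x, φ x = r i := fun i => hl i _ (Fintype.mem_piFinset.1 hr i)
  choose x hx using this
  have h1 := h0 x
  simp only [hx] at h1
  rw [h1, smul_zero]

open UniversalEnvelopingAlgebra in
theorem mlpi_uea {k K g G : Type*} [Field k] [Field K] [Algebra k K] [LieRing g] [LieAlgebra k g]
    [LieRing G] [LieAlgebra K G] [LieAlgebra k G] [IsScalarTower k K G] (f : g →ₗ⁅k⁆ G)
    (hf : Submodule.span K (Set.range f) = ⊤)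
    (h : MLPI k (UniversalEnvelopingAlgebra k g)) : MLPI K (UniversalEnvelopingAlgebra K G) := by
  let _ : Algebra k (UniversalEnvelopingAlgebra K G) := Algebra.compHom _ (algebraMap k K)
  have : IsScalarTower k K (UniversalEnvelopingAlgebra K G) := IsScalarTower.of_algebraMap_eq fun _ => rfl
  let F : g →ₗ⁅k⁆ UniversalEnvelopingAlgebra K G :=
    { toFun := fun x => ι K (f x)
      map_add' := fun x y => by simp
      map_smul' := fun r x => by
        rw [map_smul, ← algebraMap_smul K r (f x), map_smul, algebraMap_smul]; rfl
      map_lie' := fun {x y} => by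
        rw [LieHom.map_lie, LieHom.map_lie] }
  apply mlpi_transfer (lift k F) ?_ h
  let S : Subalgebra K (UniversalEnvelopingAlgebra K G) :=
    Algebra.adjoin K (Set.range (lift k F))
  have hS : S = ⊤ := by
    apply uea_top
    intro x
    have hx : x ∈ Submodule.span K (Set.range f) := by rw [hf]; trivial
    induction hx using Submodule.span_induction with
    | mem x hx =>
      obtain ⟨t, rfl⟩ := hx
      apply Algebra.subset_adjoin
      exact ⟨ι k t, by rw [lift_ι_apply]; rfl⟩
    | zero => rw [map_zero]; exact S.zero_mem
    | add x y _ _ hx hy => rw [map_add]; exact S.add_mem hx hy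
    | smul r x _ hx => rw [map_smul]; exact S.smul_mem hx r
  have h2 : Submodule.span K (Set.range (lift k F)) = Subalgebra.toSubmodule S := by
    rw [Algebra.adjoin_eq_span]
    congr 1
    have hm := Submonoid.closure_eq (MonoidHom.mrange (lift k F).toRingHom.toMonoidHom)
    have hc : ((MonoidHom.mrange (lift k F).toRingHom.toMonoidHom : Submonoid _) : Set _) =
      Set.range (lift k F) := MonoidHom.coe_mrange _
    rw [hc] at hm
    rw [hm, hc]
  rw [h2, hS]; rfl

/-- linear forms -/
noncomputable def linForm {k G ι : Type*} [Field k] [AddCommGroup G] [Module k G]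
    (b : Module.Basis ι k G) : G →ₗ[k] MvPolynomial ι k :=
  b.constr k (fun i => MvPolynomial.X i)

theorem linForm_ne_zero {k G ι : Type*} [Field k] [AddCommGroup G] [Module k G]
    (b : Module.Basis ι k G) (x : G) (hx : x ≠ 0) : linForm b x ≠ 0 := by
  have hli : LinearIndependent k (fun i : ι => (MvPolynomial.X i : MvPolynomial ι k)) := by
    exact MvPolynomial.linearIndependent_X ι k
  intro h
  apply hx
  rw [linForm, Module.Basis.constr_apply] at h
  have h2 := linearIndependent_iff.1 hli (b.repr x) h
  simpa using h2

noncomputable def derOf {k G ι : Type*} [Field k] [AddCommGroup G] [Module k G]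
    (b : Module.Basis ι k G) (φ : Module.End k G) :
    Derivation k (MvPolynomial ι k) (MvPolynomial ι k) :=
  MvPolynomial.mkDerivation k (fun i => linForm b (φ (b i)))

theorem derOf_lin {k G ι : Type*} [Field k] [AddCommGroup G] [Module k G]
    (b : Module.Basis ι k G) (φ : Module.End k G) (x : G) :
    derOf b φ (linForm b x) = linForm b (φ x) := by
  have : (derOf b φ).toLinearMap ∘ₗ linForm b = linForm b ∘ₗ φ := by
    apply b.ext
    intro i
    simp [linForm, derOf]
  exact DFunLike.congr_fun this x

theorem der_ext {k G ι : Type*} [Field k] [AddCommGroup G] [Module k G]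
    (b : Module.Basis ι k G) (D E : Derivation k (MvPolynomial ι k) (MvPolynomial ι k))
    (h : ∀ x, D (linForm b x) = E (linForm b x)) : D = E := by
  apply MvPolynomial.derivation_ext
  intro i
  simpa [linForm] using h (b i)

/-- the representation -/
noncomputable def repOf {k G ι : Type*} [Field k] [LieRing G] [LieAlgebra k G]
    (b : Module.Basis ι k G) (P : G →ₗ[k] G) (β : G →ₗ[k] Module.End k G)
    (h1 : ∀ u v w, β ⁅u, v⁆ w = β u (β v w) - β v (β u w))
    (h2 : ∀ u v, β u (P v) - β v (P u) = P ⁅u, v⁆) :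
    G →ₗ⁅k⁆ Module.End k (MvPolynomial ι k) where
  toFun u := LinearMap.mulLeft k (linForm b (P u)) + (derOf b (β u)).toLinearMap
  map_add' u v := by
    have : derOf b (β (u + v)) = derOf b (β u) + derOf b (β v) := by
      apply der_ext b; intro x; simp [derOf_lin]
    apply LinearMap.ext; intro p; simp only [this]; simp [add_mul]; abel
  map_smul' r u := by
    have : derOf b (β (r • u)) = r • derOf b (β u) := by
      apply der_ext b; intro x; simp [derOf_lin]
    apply LinearMap.ext; intro p; simp only [this]; simp
  map_lie' {u v} := by
    have : derOf b (β ⁅u, v⁆) = ⁅derOf b (β u), derOf b (β v)⁆ := by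
      apply der_ext b; intro x; simp [derOf_lin, Derivation.commutator_apply, h1]
    apply LinearMap.ext; intro p
    simp only [this, LieRing.of_associative_ring_bracket, LinearMap.add_apply, LinearMap.sub_apply,
      Module.End.mul_apply, LinearMap.mulLeft_apply, Derivation.coeFn_coe, map_add,
      Derivation.leibniz, derOf_lin, smul_eq_mul, Derivation.commutator_apply, ← h2, map_sub]
    ring

theorem repOf_apply {k G ι : Type*} [Field k] [LieRing G] [LieAlgebra k G]
    (b : Module.Basis ι k G) (P : G →ₗ[k] G) (β : G →ₗ[k] Module.End k G) (h1) (h2) (u : G)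
    (p : MvPolynomial ι k) :
    repOf b P β h1 h2 u p = linForm b (P u) * p + derOf b (β u) p := rfl

open UniversalEnvelopingAlgebra in
theorem case_one {k G : Type*} [Field k] [CharZero k] [LieRing G] [LieAlgebra k G]
    (x y : G) (c : k) (hc : c ≠ 0) (hy : y ≠ 0) (hxy : ⁅x, y⁆ = c • y)
    (h : MLPI k (UniversalEnvelopingAlgebra k G)) : False := by
  let b := Module.Basis.ofVectorSpace k G
  let ρ := repOf b 0 (LieAlgebra.ad k G).toLinearMap 
    (fun u v w => by
      change ⁅⁅u, v⁆, w⁆ = ⁅u, ⁅v, w⁆⁆ - ⁅v, ⁅u, w⁆⁆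
      rw [lie_lie]) (by intros; simp)
  have hρ : ∀ u p, ρ u p = derOf b (LieAlgebra.ad k G u) p := by
    intro u p
    change linForm b 0 * p + derOf b (LieAlgebra.ad k G u) p = _
    simp
  have hρ' : ∀ u p, lift k ρ (ι k u) p = derOf b (LieAlgebra.ad k G u) p := by
    intro u p; rw [lift_ι_apply, hρ]
  refine weight_contra (lift k ρ) h (ι k x) (ι k y) (algebraMap k _ c) ?_ ?_ ?_ ?_
  · have := (ι k).map_lie x y
    rw [hxy, map_smul, LieRing.of_associative_ring_bracket] at this
    rw [← Algebra.smul_def, this]; abel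
  · exact (Algebra.commutes _ _).symm
  · exact (Algebra.commutes _ _).symm
  · intro d
    refine ⟨linForm b x ^ d, ?_, ?_⟩
    · rw [hρ', Derivation.leibniz_pow, derOf_lin]; simp
    · intro N
      have key : ∀ j e : ℕ, j ≤ e → ∃ r : k, r ≠ 0 ∧ lift k ρ (ι k y ^ j) (linForm b x ^ e) =
          r • (linForm b x ^ (e - j) * linForm b y ^ j) := by
        intro j e
        induction j with
        | zero => intro _; exact ⟨1, one_ne_zero, by simp⟩
        | succ j ih =>
          intro hj
          obtain ⟨r, hr, hE⟩ := ih (by omega)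
          obtain ⟨m, rfl⟩ := Nat.exists_eq_add_of_le hj
          have e1 : j + 1 + m - j = m + 1 := by omega
          have e2 : j + 1 + m - (j + 1) = m := by omega
          rw [e1] at hE
          rw [e2]
          refine ⟨r * (-c * (m + 1)), by
            have : (m : k) + 1 ≠ 0 := by exact_mod_cast Nat.succ_ne_zero m
            simp [hr, hc, this], ?_⟩
          rw [pow_succ', map_mul, Module.End.mul_apply, hE, map_smul, hρ', mul_smul]
          congr 1
          have hyx : ⁅y, x⁆ = (-c) • y := by rw [← lie_skew, hxy, neg_smul]
          rw [Derivation.leibniz, Derivation.leibniz_pow, Derivation.leibniz_pow, derOf_lin, derOf_lin]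
          simp only [LieAlgebra.ad_apply, lie_self, hyx, map_zero, map_smul,
            smul_eq_mul, Algebra.smul_def, map_mul, map_add, map_natCast, map_one]
          simp
          ring
      obtain ⟨r, hr, hE⟩ := key d d le_rfl
      rw [map_mul, Module.End.mul_apply, hE, ← map_pow, AlgHom.commutes, Module.algebraMap_end_apply]
      have := linForm_ne_zero b y hy
      simp [hr, hc, this]

open UniversalEnvelopingAlgebra in
theorem case_two {k G : Type*} [Field k] [CharZero k] [LieRing G] [LieAlgebra k G]
    (h3 : ∀ u v w : G, ⁅u, ⁅v, w⁆⁆ = 0) (hna : ∃ u v : G, ⁅u, v⁆ ≠ 0)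
    (h : MLPI k (UniversalEnvelopingAlgebra k G)) : False := by
  obtain ⟨x, y₀, hxy₀⟩ := hna
  have h3' : ∀ u v w : G, ⁅⁅u, v⁆, w⁆ = 0 := by
    intro u v w; rw [← lie_skew, h3, neg_zero]
  -- functional
  let D : Submodule k G := Submodule.span k {w | ∃ u v : G, ⁅u, v⁆ = w}
  have hD : ∀ w ∈ D, ⁅w, y₀⁆ = 0 := by
    intro w hw
    induction hw using Submodule.span_induction with
    | mem w hw => obtain ⟨u, v, rfl⟩ := hw; exact h3' _ _ _
    | zero => simp
    | add a b _ _ ha hb => rw [add_lie, ha, hb, add_zero]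
    | smul r a _ ha => rw [smul_lie, ha, smul_zero]
  have hx : x ∉ D := fun hx => hxy₀ (hD x hx)
  obtain ⟨ξ₀, hξx, hξ₀⟩ := Submodule.exists_le_ker_of_notMem hx
  have hξ₀D : ∀ u v : G, ξ₀ ⁅u, v⁆ = 0 := fun u v =>
    LinearMap.mem_ker.1 (hξ₀ (Submodule.subset_span ⟨u, v, rfl⟩))
  let ξ : G →ₗ[k] k := (ξ₀ x)⁻¹ • ξ₀
  have hξ1 : ξ x = 1 := by simp [ξ, hξx]
  have hξD : ∀ u v : G, ξ ⁅u, v⁆ = 0 := fun u v => by simp [ξ, hξ₀D]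
  let y := y₀ - ξ y₀ • x
  have hξy : ξ y = 0 := by simp [y, hξ1]
  have hxy : ⁅x, y⁆ ≠ 0 := by simpa [y] using hxy₀
  have hy : y ≠ 0 := by rintro h0; rw [h0, lie_zero] at hxy; exact hxy rfl
  let P : G →ₗ[k] G := LinearMap.id - ξ.smulRight x
  have hP : ∀ u, P u = u - ξ u • x := fun u => by simp [P]
  have hPx : P x = 0 := by simp [hP, hξ1]
  have hPy : P y = y := by simp [hP, hξy]
  have hPD : ∀ u v : G, P ⁅u, v⁆ = ⁅u, v⁆ := fun u v => by simp [hP, hξD]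
  let β : G →ₗ[k] Module.End k G := LinearMap.mk₂ k (fun u w => ⁅u - (2⁻¹ : k) • P u, P w⁆)
    (by intro a b c; simp only [map_add, smul_add, ← add_lie]; congr 1; abel)
    (by intro r a c; simp only [map_smul, ← smul_lie]; congr 1; rw [smul_sub, smul_comm])
    (by intro a b c; simp only [map_add, lie_add])
    (by intro r a c; simp only [map_smul, lie_smul])
  have hβ : ∀ u w : G, β u w = ⁅u - (2⁻¹ : k) • P u, P w⁆ := fun u w => rfl
  have hββ : ∀ u v w : G, β u (β v w) = 0 := by
    intro u v w; rw [hβ v w, hβ, hPD, h3]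
  have hβD : ∀ u v w : G, β ⁅u, v⁆ w = 0 := by
    intro u v w; rw [hβ, hPD, sub_lie, smul_lie, h3', smul_zero, sub_zero]
  have hh2 : ∀ u v : G, β u (P v) - β v (P u) = P ⁅u, v⁆ := by
    intro u v
    have hPP : ∀ u, P (P u) = P u := by intro u; simp [hP, hξ1]
    rw [hβ, hβ, hPP, hPP, hPD]
    rw [sub_lie, sub_lie, smul_lie, smul_lie, ← lie_skew (P v) (P u), smul_neg]
    have e2 : ⁅u, P v⁆ - ⁅v, P u⁆ - ⁅P u, P v⁆ = ⁅u, v⁆ := by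
      rw [hP, hP]
      simp only [lie_sub, sub_lie, lie_smul, smul_lie, lie_self, smul_zero, ← lie_skew u v, ← lie_skew u x, ← lie_skew v x, smul_neg]
      module
    rw [← e2]
    module
  let b := Module.Basis.ofVectorSpace k G
  let ρ := repOf b P β (fun u v w => by rw [hβD, hββ, hββ, sub_zero]) hh2
  have hρ' : ∀ u p, lift k ρ (ι k u) p = linForm b (P u) * p + derOf b (β u) p := by
    intro u p; rw [lift_ι_apply]; rfl
  have hbr := (ι k).map_lie x y
  rw [LieRing.of_associative_ring_bracket] at hbr
  have hcom : ∀ w : G, ι k w * ι k ⁅x, y⁆ = ι k ⁅x, y⁆ * ι k w := by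
    intro w
    have := (ι k).map_lie w ⁅x, y⁆
    rw [h3, map_zero, LieRing.of_associative_ring_bracket] at this
    exact (sub_eq_zero.1 this.symm)
  refine weight_contra (lift k ρ) h (ι k y * ι k x) (ι k y) (ι k ⁅x, y⁆) ?_ ?_ (hcom y) ?_
  · rw [← hcom y, hbr]; noncomm_ring
  · rw [mul_assoc, hcom x, ← mul_assoc, hcom y, mul_assoc]
  · intro d
    refine ⟨1, ?_, ?_⟩
    · rw [map_mul, Module.End.mul_apply, hρ' x, hPx]; simp
    · intro N
      have hyd : ∀ j : ℕ, lift k ρ (ι k y ^ j) 1 = linForm b y ^ j := by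
        intro j
        induction j with
        | zero => simp
        | succ j ih =>
          rw [pow_succ', map_mul, Module.End.mul_apply, ih, hρ', hPy, Derivation.leibniz_pow, derOf_lin, hβ, hPy]
          simp [pow_succ']
      have hD0 : derOf b (β ⁅x, y⁆) = 0 := by
        apply der_ext b
        intro w
        rw [derOf_lin, hβD]; simp
      have hzd : ∀ (j : ℕ) p, lift k ρ (ι k ⁅x, y⁆ ^ j) p = linForm b ⁅x, y⁆ ^ j * p := by
        intro j p
        induction j with
        | zero => simp
        | succ j ih =>
          rw [pow_succ', map_mul, Module.End.mul_apply, ih, hρ', hPD, hD0]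
          simp [pow_succ', mul_assoc]
      rw [map_mul, Module.End.mul_apply, hyd, hzd]
      exact mul_ne_zero (pow_ne_zero _ (linForm_ne_zero b _ hxy)) (pow_ne_zero _ (linForm_ne_zero b _ hy))

theorem exists_eigen {K V : Type*} [Field K] [IsAlgClosed K] [AddCommGroup V] [Module K V]
    [FiniteDimensional K V] (f : Module.End K V) (hf : ¬ IsNilpotent f) :
    ∃ (c : K) (v : V), c ≠ 0 ∧ v ≠ 0 ∧ f v = c • v := by
  by_contra hcon
  push Not at hcon
  apply hf
  rw [LinearMap.isNilpotent_iff_charpoly]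
  have hs : f.charpoly.Splits := IsAlgClosed.splits _
  have hm := f.charpoly_monic
  have hr : ∀ a ∈ f.charpoly.roots, a = 0 := by
    intro a ha
    by_contra h0
    have hev : f.HasEigenvalue a := by
      rw [Module.End.hasEigenvalue_iff_isRoot_charpoly]
      exact Polynomial.isRoot_of_mem_roots ha
    obtain ⟨v, hv⟩ := hev.exists_hasEigenvector
    exact hcon a v h0 hv.2 hv.apply_eq_smul
  have h1 := hs.eq_prod_roots_of_monic hm
  rw [Multiset.eq_replicate_of_mem hr] at h1
  rw [h1]
  have hd := hs.natDegree_eq_card_roots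
  rw [LinearMap.charpoly_natDegree] at hd
  simp [← hd]

theorem nilp_ad_of_mlpi {k g : Type*} [Field k] [CharZero k] [LieRing g] [LieAlgebra k g]
    [FiniteDimensional k g] (h : MLPI k (UniversalEnvelopingAlgebra k g)) (x : g) :
    IsNilpotent (LieAlgebra.ad k g x) := by
  by_contra hx
  let K := AlgebraicClosure k
  let G := TensorProduct k K g
  let f : g →ₗ⁅k⁆ G :=
    { TensorProduct.mk k K g 1 with
      map_lie' := fun {x y} => by simp [G, LieAlgebra.ExtendScalars.bracket_tmul] }
  have hfx : ∀ t, f t = TensorProduct.tmul k (1 : K) t := fun t => rfl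
  have hspan : Submodule.span K (Set.range f) = ⊤ := by
    rw [eq_top_iff]
    intro t _
    induction t using TensorProduct.induction_on with
    | zero => exact Submodule.zero_mem _
    | tmul a t =>
      have : TensorProduct.tmul k a t = a • f t := by
        rw [hfx, TensorProduct.smul_tmul']; simp
      rw [this]
      exact Submodule.smul_mem _ _ (Submodule.subset_span ⟨t, rfl⟩)
    | add a b ha hb => exact Submodule.add_mem _ (ha trivial) (hb trivial)
  have hK := mlpi_uea f hspan h
  have hbc : LieAlgebra.ad K G (f x) = (LieAlgebra.ad k g x).baseChange K :=
    LieModule.toEnd_baseChange (R := k) K g g x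
  have hnn : ¬ IsNilpotent (LieAlgebra.ad K G (f x)) := by
    rintro ⟨n, hn⟩
    apply hx
    refine ⟨n, ?_⟩
    rw [hbc, ← LinearMap.baseChange_pow] at hn
    ext t
    have := DFunLike.congr_fun hn (TensorProduct.tmul k (1 : K) t)
    rw [LinearMap.baseChange_tmul, LinearMap.zero_apply] at this
    have hinj := Module.FaithfullyFlat.tensorProduct_mk_injective (A := k) (B := K) g
    apply hinj
    rw [TensorProduct.mk_apply, this, LinearMap.zero_apply, map_zero]
  obtain ⟨c, v, hc, hv, hcv⟩ := exists_eigen _ hnn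
  exact case_one (f x) v c hc hv hcv hK

theorem abelian_of_mlpi {k g : Type*} [Field k] [CharZero k] [LieRing g] [LieAlgebra k g]
    [FiniteDimensional k g] (h : MLPI k (UniversalEnvelopingAlgebra k g)) : IsLieAbelian g := by
  have hnil : LieRing.IsNilpotent g :=
    (LieAlgebra.isNilpotent_iff_forall (R := k) (L := g)).2 (nilp_ad_of_mlpi h)
  let I : LieIdeal k g := ⁅(⊤ : LieIdeal k g), ⁅(⊤ : LieIdeal k g), (⊤ : LieIdeal k g)⁆⁆
  let f : g →ₗ⁅k⁆ g ⧸ I :=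
    { (LieSubmodule.Quotient.mk' I : g →ₗ[k] g ⧸ I) with
      map_lie' := fun {x y} => LieSubmodule.Quotient.mk_bracket I x y }
  have hf : Function.Surjective f := LieSubmodule.Quotient.surjective_mk' I
  have hQ : MLPI k (UniversalEnvelopingAlgebra k (g ⧸ I)) :=
    mlpi_uea f (by rw [hf.range_eq]; simp) h
  have h1 : ∀ u v : g ⧸ I, ⁅u, v⁆ = 0 := by
    by_contra hcon
    push Not at hcon
    refine case_two ?_ hcon hQ
    intro u v w
    obtain ⟨u, rfl⟩ := hf u
    obtain ⟨v, rfl⟩ := hf v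
    obtain ⟨w, rfl⟩ := hf w
    rw [← LieHom.map_lie, ← LieHom.map_lie]
    change LieSubmodule.Quotient.mk' I _ = 0
    rw [LieSubmodule.Quotient.mk_eq_zero]
    exact LieSubmodule.lie_mem_lie trivial (LieSubmodule.lie_mem_lie trivial trivial)
  have h2 : ∀ u v : g, ⁅u, v⁆ ∈ I := by
    intro u v
    have := h1 (f u) (f v)
    rw [← LieHom.map_lie] at this
    change LieSubmodule.Quotient.mk' I _ = 0 at this
    rwa [LieSubmodule.Quotient.mk_eq_zero] at this
  have h3 : ⁅(⊤ : LieIdeal k g), (⊤ : LieIdeal k g)⁆ ≤ I := by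
    rw [LieSubmodule.lie_le_iff]
    intro x _ m _; exact h2 x m
  have h4 : ∀ n, ⁅(⊤ : LieIdeal k g), (⊤ : LieIdeal k g)⁆ ≤ LieModule.lowerCentralSeries k g g n := by
    intro n
    induction n with
    | zero => simp
    | succ n ih =>
      rw [LieModule.lowerCentralSeries_succ]
      exact h3.trans (LieSubmodule.mono_lie_right _ ih)
  obtain ⟨n, hn⟩ := (LieModule.isNilpotent_iff k g g).1 hnil
  refine ⟨fun u v => ?_⟩
  have : ⁅u, v⁆ ∈ LieModule.lowerCentralSeries k g g n :=
    h4 n (LieSubmodule.lie_mem_lie trivial trivial)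
  rw [hn] at this
  simpa using this

/-- The standard polynomial. -/
noncomputable def stdPoly (k : Type*) [Field k] (n : ℕ) : FreeAlgebra k (Fin n) :=
  ∑ σ : Equiv.Perm (Fin n), ((Equiv.Perm.sign σ : ℤ)) •
    (List.ofFn (fun i => FreeAlgebra.ι k (σ i))).prod

theorem stdPoly_ne_zero (k : Type*) [Field k] (n : ℕ) : stdPoly k n ≠ 0 := by
  intro h
  have h1 := congrArg (fun t => (FreeAlgebra.equivMonoidAlgebraFreeMonoid t).coeff
    (FreeMonoid.ofList (List.ofFn (fun i : Fin n => i)))) h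
  have h2 : ∀ σ : Equiv.Perm (Fin n), FreeAlgebra.equivMonoidAlgebraFreeMonoid
      (List.ofFn (fun i => FreeAlgebra.ι k (σ i))).prod =
      MonoidAlgebra.of k _ (FreeMonoid.ofList (List.ofFn (fun i => σ i))) := by
    intro σ
    have e : ∀ l : List (Fin n), FreeAlgebra.equivMonoidAlgebraFreeMonoid
      (l.map (FreeAlgebra.ι k)).prod = MonoidAlgebra.of k _ (FreeMonoid.ofList l) := by
      intro l
      induction l with
      | nil => simp; rfl
      | cons a l ih =>
        rw [List.map_cons, List.prod_cons, map_mul, ih, FreeMonoid.ofList_cons, map_mul]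
        congr 1
        simp [FreeAlgebra.equivMonoidAlgebraFreeMonoid]
    rw [← e, List.map_ofFn]; rfl
  simp only [stdPoly, map_sum, map_zsmul, h2] at h1
  simp only [MonoidAlgebra.coeff_sum, Finsupp.finsetSum_apply] at h1
  rw [Finset.sum_eq_single 1] at h1
  · simp at h1
  · intro σ _ hσ
    have hne : FreeMonoid.ofList (List.ofFn (fun i => σ i)) ≠ FreeMonoid.ofList (List.ofFn (fun i : Fin n => i)) := by
      intro h
      apply hσ
      ext i
      have := congrFun (List.ofFn_injective (FreeMonoid.ofList.injective h)) i
      simp [this]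
    simp [hne]
  · simp

theorem pi_of_finite_center {k A : Type*} [Field k] [Ring A] [Algebra k A]
    (h : Module.Finite (Subalgebra.center k A) A) : SatisfiesPolynomialIdentity k A := by
  obtain ⟨n, s, hs⟩ := Module.Finite.exists_fin (R := Subalgebra.center k A) (M := A)
  refine ⟨n + 1, stdPoly k (n + 1), stdPoly_ne_zero k _, fun v => ?_⟩
  let _ : Algebra (Subalgebra.center k A) A := Algebra.ofModule
    (fun r x y => smul_mul_assoc r x y)
    (fun r x y => by
      change x * (r.1 * y) = r.1 * (x * y)
      rw [← mul_assoc, ← mul_assoc, (Subalgebra.mem_center_iff.1 r.2 x)])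
  let F := MultilinearMap.alternatization
    (MultilinearMap.mkPiAlgebraFin (Subalgebra.center k A) (n + 1) A)
  have hF : F v = FreeAlgebra.lift k v (stdPoly k (n + 1)) := by
    simp only [F, stdPoly, map_sum, map_zsmul, map_list_prod, List.map_ofFn,
      MultilinearMap.alternatization_apply]
    refine Finset.sum_congr rfl fun σ _ => ?_
    simp [Function.comp_def, Units.smul_def]
  rw [← hF]
  have hv : ∀ i, ∃ c : Fin n → Subalgebra.center k A, ∑ j, c j • s j = v i := by
    intro i
    rw [← Submodule.mem_span_range_iff_exists_fun, hs]; trivial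
  choose c hc using hv
  have ev : v = fun i => ∑ j, c i j • s j := funext fun i => (hc i).symm
  rw [ev]
  change F.toMultilinearMap _ = 0
  rw [MultilinearMap.map_sum]
  refine Finset.sum_eq_zero fun r _ => ?_
  rw [F.toMultilinearMap.map_smul_univ (fun i => c i (r i)) (fun i => s (r i))]
  obtain ⟨i, j, hij, hr⟩ := Fintype.exists_ne_map_eq_of_card_lt r (by simp)
  have : F (fun i => s (r i)) = 0 := F.map_eq_zero_of_eq _ (by simp [hr]) hij
  change _ • F (fun i => s (r i)) = 0
  rw [this, smul_zero]

theorem exists_span_pow {k V : Type*} [Field k] [AddCommGroup V] [Module k V]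
    [FiniteDimensional k V] (T : ℕ → V) : ∃ m, T m ∈ Submodule.span k (T '' Set.Iio m) := by
  let W : ℕ →o Submodule k V :=
    ⟨fun m => Submodule.span k (T '' Set.Iio m), fun a b hab =>
      Submodule.span_mono (Set.image_mono (Set.Iio_subset_Iio hab))⟩
  obtain ⟨m, hm⟩ := monotone_stabilizes_iff_noetherian.2 (inferInstance : IsNoetherian k V) W
  refine ⟨m, ?_⟩
  have h1 := hm (m + 1) (Nat.le_succ m)
  change T m ∈ W m
  rw [h1]
  exact Submodule.subset_span ⟨m, Nat.lt_succ_self m, rfl⟩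

open UniversalEnvelopingAlgebra in
theorem uea_nontrivial {k g : Type*} [Field k] [LieRing g] [LieAlgebra k g] :
    Nontrivial (UniversalEnvelopingAlgebra k g) :=
  (lift k (0 : g →ₗ⁅k⁆ k)).toRingHom.domain_nontrivial

open UniversalEnvelopingAlgebra in
theorem pow_comm {k g : Type*} [Field k] (p : ℕ) [hp : Fact p.Prime] [CharP k p]
    [LieRing g] [LieAlgebra k g] (x y : g) (j : ℕ) :
    ι k x ^ p ^ j * ι k y - ι k y * ι k x ^ p ^ j = ι k (((LieAlgebra.ad k g x) ^ p ^ j) y) := by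
  have := uea_nontrivial (k := k) (g := g)
  have : CharP (Module.End k (UniversalEnvelopingAlgebra k g)) p :=
    charP_of_injective_algebraMap (algebraMap k _).injective p
  have hc : Commute (LinearMap.mulLeft k (ι k x)) (LinearMap.mulRight k (ι k x)) := 
    LinearMap.commute_mulLeft_right _ _
  have h1 := sub_pow_char_pow_of_commute (p := p) (n := j) hc
  have h2 : ∀ n : ℕ, ((LinearMap.mulLeft k (ι k x) - LinearMap.mulRight k (ι k x)) ^ n) (ι k y) =
      ι k (((LieAlgebra.ad k g x) ^ n) y) := by
    intro n
    induction n with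
    | zero => simp
    | succ n ih =>
      rw [pow_succ', pow_succ', Module.End.mul_apply, Module.End.mul_apply, ih, LieAlgebra.ad_apply,
        LieHom.map_lie, LieRing.of_associative_ring_bracket]
      simp
  rw [← h2, h1, LinearMap.sub_apply, LinearMap.pow_mulLeft, LinearMap.pow_mulRight]
  simp

open UniversalEnvelopingAlgebra in
/-- each element is, up to lower powers, a root of a monic polynomial over the centre -/
theorem exists_central {k g : Type*} [Field k] (p : ℕ) [hp : Fact p.Prime] [CharP k p]
    [LieRing g] [LieAlgebra k g] [FiniteDimensional k g] (x : g) :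
    ∃ (q : ℕ) (w : UniversalEnvelopingAlgebra k g), 0 < q ∧
      w ∈ Submodule.span k ((fun i => ι k x ^ i) '' Set.Iio q) ∧
      ι k x ^ q - w ∈ Subalgebra.center k (UniversalEnvelopingAlgebra k g) := by
  obtain ⟨m, hm⟩ := exists_span_pow (k := k) (fun j => (LieAlgebra.ad k g x) ^ p ^ j)
  rw [Finsupp.mem_span_image_iff_linearCombination] at hm
  obtain ⟨l, hl, hlm⟩ := hm
  refine ⟨p ^ m, Finsupp.linearCombination k (fun j => ι k x ^ p ^ j) l, pow_pos hp.out.pos _, ?_, ?_⟩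
  · rw [Finsupp.linearCombination_apply]
    refine Submodule.sum_mem _ fun j hj => Submodule.smul_mem _ _ (Submodule.subset_span ?_)
    exact ⟨p ^ j, Nat.pow_lt_pow_right hp.out.one_lt (hl hj), rfl⟩
  · set e := ι k x ^ p ^ m - Finsupp.linearCombination k (fun j => ι k x ^ p ^ j) l with he
    have hcomm : ∀ y, e * ι k y = ι k y * e := by
      intro y
      have h1 := congrArg (fun t => ι k (t y)) hlm
      simp only [Finsupp.linearCombination_apply, Finsupp.sum, LinearMap.sum_apply,
        LinearMap.smul_apply, map_sum, map_smul, ← pow_comm] at h1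
      rw [← sub_eq_zero, he, Finsupp.linearCombination_apply, Finsupp.sum]
      simp only [sub_mul, mul_sub, Finset.sum_mul, Finset.mul_sum, smul_mul_assoc, mul_smul_comm,
        smul_sub, Finset.sum_sub_distrib] at h1 ⊢
      rw [sub_sub_sub_comm, h1, sub_self]
    have htop : Subalgebra.centralizer k {e} = ⊤ := by
      apply uea_top
      intro y
      rw [Subalgebra.mem_centralizer_iff]
      rintro _ rfl
      exact hcomm y
    rw [Subalgebra.mem_center_iff]
    intro b
    have hb : b ∈ Subalgebra.centralizer k {e} := by rw [htop]; trivial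
    exact ((Subalgebra.mem_centralizer_iff k).1 hb e rfl).symm

open UniversalEnvelopingAlgebra in
theorem finite_center {k g : Type*} [Field k] (p : ℕ) [hp : Fact p.Prime] [CharP k p]
    [LieRing g] [LieAlgebra k g] [FiniteDimensional k g] :
    Module.Finite (Subalgebra.center k (UniversalEnvelopingAlgebra k g))
      (UniversalEnvelopingAlgebra k g) := by
  let U := UniversalEnvelopingAlgebra k g
  let Z := Subalgebra.center k U
  let b := Module.finBasis k g
  let n := Module.finrank k g
  let X : Fin n → U := fun i => ι k (b i)
  have hk : ∀ (W : Submodule Z U) (r : k) (u : U), u ∈ W → r • u ∈ W := by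
    intro W r u hu
    have : r • u = (algebraMap k Z r) • u := by
      rw [Algebra.smul_def]; rfl
    rw [this]; exact W.smul_mem _ hu
  have hspan : ∀ (W : Submodule Z U) (s : Set U), s ⊆ W → ∀ u ∈ Submodule.span k s, u ∈ W := by
    intro W s hs u hu
    induction hu using Submodule.span_induction with
    | mem u hu => exact hs hu
    | zero => exact W.zero_mem
    | add a b _ _ ha hb => exact W.add_mem ha hb
    | smul r a _ ha => exact hk W r a ha
  have hZ : ∀ (z : Z) (u v : U), u * (z • v) = z • (u * v) := by
    intro z u v
    change u * (z.1 * v) = z.1 * (u * v)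
    rw [← mul_assoc, ← mul_assoc, Subalgebra.mem_center_iff.1 z.2 u]
  have hXι : ∀ x : g, ι k x ∈ Submodule.span k (Set.range X) := by
    intro x
    rw [← b.sum_repr x, map_sum]
    refine Submodule.sum_mem _ fun i _ => ?_
    rw [map_smul]
    exact Submodule.smul_mem _ _ (Submodule.subset_span ⟨i, rfl⟩)
  let mon : List (Fin n) → U := fun l => (l.map X).prod
  have mon_cons : ∀ i l, mon (i :: l) = X i * mon l := fun i l => by simp [mon]
  have mon_append : ∀ l l', mon (l ++ l') = mon l * mon l' := fun i l => by simp [mon]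
  let W : ℕ → Submodule Z U := fun m => Submodule.span Z (mon '' {l | l.length < m})
  have hmon : ∀ m l, l.length < m → mon l ∈ W m := fun m l hl => Submodule.subset_span ⟨l, hl, rfl⟩
  have hWX : ∀ m i u, u ∈ W m → X i * u ∈ W (m + 1) := by
    intro m i u hu
    induction hu using Submodule.span_induction with
    | mem u hu =>
      obtain ⟨l, hl, rfl⟩ := hu
      rw [← mon_cons]
      exact hmon _ _ (by simpa using hl)
    | zero => rw [mul_zero]; exact Submodule.zero_mem _
    | add a b _ _ ha hb => rw [mul_add]; exact Submodule.add_mem _ ha hb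
    | smul r a _ ha => rw [hZ]; exact Submodule.smul_mem _ _ ha
  have hperm : ∀ l l' : List (Fin n), l.Perm l' → mon l - mon l' ∈ W l.length := by
    intro l l' h
    induction h with
    | nil => rw [sub_self]; exact Submodule.zero_mem _
    | cons i h ih => rw [mon_cons, mon_cons, ← mul_sub]; exact hWX _ _ _ ih
    | swap i j l =>
      have e : mon (j :: i :: l) - mon (i :: j :: l) = ι k ⁅b j, b i⁆ * mon l := by
        rw [LieHom.map_lie, LieRing.of_associative_ring_bracket]
        simp only [mon_cons, X, sub_mul, mul_assoc]
      rw [e]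
      refine hspan _ ((fun u => u * mon l) '' Set.range X) ?_ _ ?_
      · rintro _ ⟨_, ⟨t, rfl⟩, rfl⟩
        change X t * mon l ∈ W _
        rw [← mon_cons]
        exact hmon _ _ (by simp)
      · have := Submodule.mem_map_of_mem (f := LinearMap.mulRight k (mon l)) (hXι ⁅b j, b i⁆)
        rw [Submodule.map_span] at this
        exact this
    | trans h1 h2 ih1 ih2 =>
      rw [← h1.length_eq] at ih2
      have := Submodule.add_mem _ ih1 ih2
      rwa [sub_add_sub_cancel] at this
  have hex := fun i => exists_central (k := k) p (b i)
  choose q w hq hw hc using hex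
  let N := ∑ i, q i
  have hall : ∀ m l, l.length = m → mon l ∈ W (N + 1) := by
    intro m
    induction m using Nat.strong_induction_on with
    | _ m ih =>
      intro l hl
      by_cases hm : m ≤ N
      · exact hmon _ _ (by omega)
      have hle : W m ≤ W (N + 1) := by
        refine Submodule.span_le.2 ?_
        rintro _ ⟨l', hl', rfl⟩
        exact ih _ hl' l' rfl
      obtain ⟨i, hi⟩ : ∃ i, q i ≤ l.count i := by
        by_contra hcon
        push Not at hcon
        have h1 : ∑ i, l.count i = l.length := by
          have := Multiset.sum_count_eq_card (s := Finset.univ) (m := (l : Multiset (Fin n))) (by simp)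
          simpa using this
        have h2 : ∑ i, l.count i ≤ N := Finset.sum_le_sum fun i _ => (hcon i).le
        omega
      obtain ⟨l', hl'⟩ : ∃ l', l.Perm (List.replicate (q i) i ++ l') := by
        have : (List.replicate (q i) i).Sublist l := List.replicate_sublist_iff.2 hi
        exact List.Sublist.exists_perm_append this
      have hlen : q i + l'.length = m := by
        have := hl'.length_eq
        simp at this; omega
      have h1 := hle (hl ▸ hperm _ _ hl')
      have mon_rep : ∀ j, mon (List.replicate j i ++ l') = X i ^ j * mon l' := by
        intro j; rw [mon_append]; simp [mon]
      have h2 : mon (List.replicate (q i) i ++ l') ∈ W (N + 1) := by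
        rw [mon_rep]
        have e : X i ^ q i * mon l' = (⟨_, hc i⟩ : Z) • mon l' + w i * mon l' := by
          change _ = (ι k (b i) ^ q i - w i) * mon l' + w i * mon l'
          rw [← add_mul, sub_add_cancel]
        rw [e]
        refine Submodule.add_mem _ (Submodule.smul_mem _ _ ?_) ?_
        · exact ih l'.length (by have := hq i; omega) l' rfl
        · refine hspan _ ((fun u => u * mon l') '' ((fun j => X i ^ j) '' Set.Iio (q i))) ?_ _ ?_
          · rintro _ ⟨_, ⟨t, ht, rfl⟩, rfl⟩
            change X i ^ t * mon l' ∈ W _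
            rw [← mon_rep]
            have ht' : t < q i := ht
            exact ih (t + l'.length) (by omega) _ (by simp)
          · have := Submodule.mem_map_of_mem (f := LinearMap.mulRight k (mon l')) (hw i)
            rw [Submodule.map_span] at this
            exact this
      have := Submodule.add_mem _ h1 h2
      rwa [sub_add_cancel] at this
  have hWXN : ∀ i u, u ∈ W (N + 1) → X i * u ∈ W (N + 1) := by
    intro i u hu
    have h1 := hWX _ i u hu
    have : W (N + 1 + 1) ≤ W (N + 1) := by
      refine Submodule.span_le.2 ?_
      rintro _ ⟨l', hl', rfl⟩
      exact hall _ l' rfl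
    exact this h1
  let S : Subalgebra k U :=
    { carrier := {u | ∀ v ∈ W (N + 1), u * v ∈ W (N + 1)}
      mul_mem' := fun {a c} ha hc v hv => by rw [mul_assoc]; exact ha _ (hc _ hv)
      add_mem' := fun {a c} ha hc v hv => by
        rw [add_mul]; exact Submodule.add_mem _ (ha _ hv) (hc _ hv)
      algebraMap_mem' := fun r v hv => by
        rw [← Algebra.smul_def]; exact hk _ _ _ hv }
  have hS : S = ⊤ := by
    apply uea_top
    intro x v hv
    refine hspan _ ((fun u => u * v) '' Set.range X) ?_ _ ?_
    · rintro _ ⟨_, ⟨t, rfl⟩, rfl⟩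
      exact hWXN t v hv
    · have := Submodule.mem_map_of_mem (f := LinearMap.mulRight k v) (hXι x)
      rw [Submodule.map_span] at this
      exact this
  have hW : W (N + 1) = ⊤ := by
    rw [eq_top_iff]
    intro u _
    have hu : u ∈ S := by rw [hS]; trivial
    have := hu (mon []) (hmon _ _ (by simp))
    simpa [mon] using this
  refine ⟨⟨((List.finite_length_lt (Fin n) (N + 1)).image mon).toFinset, ?_⟩⟩
  rw [Set.Finite.coe_toFinset]
  exact hW

theorem finite_center_of_abelian {k g : Type*} [Field k]
    [LieRing g] [LieAlgebra k g] (h : IsLieAbelian g) :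
    Module.Finite (Subalgebra.center k (UniversalEnvelopingAlgebra k g))
      (UniversalEnvelopingAlgebra k g) := by
  have hc : ∀ x : g, UniversalEnvelopingAlgebra.ι k x ∈
      Subalgebra.center k (UniversalEnvelopingAlgebra k g) := by
    intro x
    rw [Subalgebra.mem_center_iff]
    intro u
    have htop : Subalgebra.centralizer k {UniversalEnvelopingAlgebra.ι k x} = ⊤ := by
      apply uea_top
      intro y
      rw [Subalgebra.mem_centralizer_iff]
      rintro _ rfl
      have := (UniversalEnvelopingAlgebra.ι k).map_lie x y
      rw [trivial_lie_zero, map_zero, LieRing.of_associative_ring_bracket] at this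
      exact sub_eq_zero.1 this.symm
    have hu : u ∈ Subalgebra.centralizer k {UniversalEnvelopingAlgebra.ι k x} := by
      rw [htop]; trivial
    exact ((Subalgebra.mem_centralizer_iff k).1 hu _ rfl).symm
  have hC := uea_top _ hc
  refine ⟨⟨{1}, ?_⟩⟩
  rw [eq_top_iff]
  intro u _
  have hu : u ∈ Subalgebra.center k (UniversalEnvelopingAlgebra k g) := by rw [hC]; trivial
  rw [Finset.coe_singleton, Submodule.mem_span_singleton]
  exact ⟨⟨u, hu⟩, mul_one u⟩

end Aux

theorem universalEnvelopingAlgebra_PI_iff_abelian_or_positive_char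
    (k : Type u) [Field k] (g : Type v) [LieRing g] [LieAlgebra k g]
    [FiniteDimensional k g] :
    SatisfiesPolynomialIdentity k (UniversalEnvelopingAlgebra k g) ↔
      (IsLieAbelian g ∨ ringChar k ≠ 0) := by
  constructor
  · intro h
    by_cases h0 : ringChar k = 0
    · left
      have : CharP k 0 := (ringChar.eq_iff).1 h0
      have : CharZero k := CharP.charP_to_charZero k
      exact abelian_of_mlpi (mlpi_of_pi h)
    · exact Or.inr h0
  · rintro (h | h)
    · exact pi_of_finite_center (finite_center_of_abelian h)
    · have hp : Fact (ringChar k).Prime := ⟨(CharP.char_is_prime_or_zero k (ringChar k)).resolve_right h⟩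
      exact pi_of_finite_center (finite_center (ringChar k))
end
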